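/- arXiv:1912.07194 — 4 statements merged into one kernel-verified Lean document; each statement's English description precedes it below -/
import Mathlib

section
/- Let f: ℂ^{n×n} → ℝ be real analytic as a function of the real and imaginary parts of the matrix entries. Then every U ∈ U(n) satisfies a Łojasiewicz inequality for the projected gradient: there exist δ > 0, σ > 0 and ζ ∈ (0, 1/2] such that for all U' ∈ U(n) with ‖U' − U‖ < δ, it holds that |f(U') − f(U)|^{1−ζ} ≤ σ ‖ProjGrad f(U')‖. -/
open Matrix BigOperators Filter

/-- Frobenius norm of a complex matrix. -/
noncomputable def frobC {n : ℕ} (A : Matrix (Fin n) (Fin n) ℂ) : ℝ :=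
  Real.sqrt (∑ i, ∑ j, Complex.normSq (A i j))

/-- `g` is the Euclidean gradient of `f : ℂ^{n×n} → ℝ` with respect to the real
inner product `⟨A,B⟩ = Re tr(Aᴴ B)`: the derivative of `f` at `U` in a real direction
`t ↦ U + t H` equals `Re tr((g U)ᴴ H) = ∑ᵢⱼ Re(conj((g U)ᵢⱼ) Hᵢⱼ)`. -/
def IsGradC {n : ℕ} (f : Matrix (Fin n) (Fin n) ℂ → ℝ)
    (g : Matrix (Fin n) (Fin n) ℂ → Matrix (Fin n) (Fin n) ℂ) : Prop :=
  ∀ U H, HasDerivAt (fun t : ℝ => f (U + t • H))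
    (∑ i, ∑ j, ((starRingEnd ℂ) (g U i j) * H i j).re) 0

/-- Riemannian (projected) gradient on U(n): `U (Λ - Λᴴ)/2` with `Λ = Uᴴ ∇f(U)`. -/
noncomputable def projGradC {n : ℕ}
    (g : Matrix (Fin n) (Fin n) ℂ → Matrix (Fin n) (Fin n) ℂ)
    (U : Matrix (Fin n) (Fin n) ℂ) : Matrix (Fin n) (Fin n) ℂ :=
  U * ((1 / 2 : ℂ) • (Uᴴ * g U - (Uᴴ * g U)ᴴ))

open scoped Topology ContDiff

namespace Loj

/-- Germs of analytic functions have no zero divisors. -/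
theorem eventually_zero_or {E : Type*} [NormedAddCommGroup E] [NormedSpace ℝ E]
    {f g : E → ℝ} {x₀ : E} (hf : AnalyticAt ℝ f x₀) (hg : AnalyticAt ℝ g x₀)
    (h : ∀ᶠ x in 𝓝 x₀, f x * g x = 0) :
    (∀ᶠ x in 𝓝 x₀, f x = 0) ∨ (∀ᶠ x in 𝓝 x₀, g x = 0) := by
  obtain ⟨r, hr, hball⟩ := Metric.eventually_nhds_iff_ball.1
    (hf.eventually_analyticAt.and (hg.eventually_analyticAt.and h))
  by_cases hz : ∀ x ∈ Metric.ball x₀ r, f x = 0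
  · left
    exact Metric.eventually_nhds_iff_ball.2 ⟨r, hr, hz⟩
  · right
    push Not at hz
    obtain ⟨x, hx, hfx⟩ := hz
    have hgan : AnalyticOnNhd ℝ g (Metric.ball x₀ r) := fun y hy => (hball y hy).2.1
    have hev : g =ᶠ[𝓝 x] 0 := by
      have h1 : ∀ᶠ y in 𝓝 x, f y ≠ 0 := (hball x hx).1.continuousAt.eventually_ne hfx
      have h2 : ∀ᶠ y in 𝓝 x, y ∈ Metric.ball x₀ r := Metric.isOpen_ball.mem_nhds hx
      filter_upwards [h1, h2] with y hy1 hy2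
      have := (hball y hy2).2.2
      simpa [hy1] using this
    have := hgan.eqOn_zero_of_preconnected_of_eventuallyEq_zero
      (convex_ball x₀ r).isPreconnected hx hev
    exact Metric.eventually_nhds_iff_ball.2 ⟨r, hr, fun y hy => this hy⟩

/-- Auxiliary power series for division. -/
noncomputable def divSeries {E : Type*} [NormedAddCommGroup E] [NormedSpace ℝ E]
    (p : FormalMultilinearSeries ℝ E ℝ) (P : E →L[ℝ] E) (e : E) :
    FormalMultilinearSeries ℝ E ℝ := fun k =>
  ∑ i : Fin (k + 1),
    ((p (k + 1)).curryMid i e).compContinuousLinearMap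
      (fun j : Fin k => if j.castSucc < i then ContinuousLinearMap.id ℝ E else P)

theorem divSeries_norm {E : Type*} [NormedAddCommGroup E] [NormedSpace ℝ E]
    (p : FormalMultilinearSeries ℝ E ℝ) (P : E →L[ℝ] E) (e : E) (hP : ‖P‖ ≤ 1) (he : ‖e‖ ≤ 1)
    (k : ℕ) : ‖divSeries p P e k‖ ≤ (k + 1) * ‖p (k + 1)‖ := by
  unfold divSeries
  refine (norm_sum_le _ _).trans ?_
  have : ∀ i ∈ (Finset.univ : Finset (Fin (k + 1))), ‖((p (k + 1)).curryMid i e).compContinuousLinearMap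
      (fun j : Fin k => if j.castSucc < i then ContinuousLinearMap.id ℝ E else P)‖ ≤ ‖p (k + 1)‖ := by
    intro i _
    refine (ContinuousMultilinearMap.norm_compContinuousLinearMap_le _ _).trans ?_
    have h1 : ‖(p (k + 1)).curryMid i e‖ ≤ ‖p (k + 1)‖ := by
      refine (ContinuousLinearMap.le_opNorm _ _).trans ?_
      rw [ContinuousMultilinearMap.norm_curryMid]
      exact mul_le_of_le_one_right (norm_nonneg _) he
    have h2 : ∏ j : Fin k, ‖(if j.castSucc < i then ContinuousLinearMap.id ℝ E else P)‖ ≤ 1 := by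
      apply Finset.prod_le_one
      · intros; exact norm_nonneg _
      · intro j _
        split_ifs
        · exact ContinuousLinearMap.norm_id_le
        · exact hP
    calc _ ≤ ‖p (k + 1)‖ * 1 := by gcongr
      _ = _ := mul_one _
  refine (Finset.sum_le_sum this).trans ?_
  simp

theorem divSeries_apply {E : Type*} [NormedAddCommGroup E] [NormedSpace ℝ E]
    (p : FormalMultilinearSeries ℝ E ℝ) (P : E →L[ℝ] E) (e : E) (l : ℝ) (x : E)
    (hx : x - P x = l • e) (k : ℕ) :
    (p (k + 1)) (fun _ => x) - (p (k + 1)) (fun _ => P x) = l * divSeries p P e k (fun _ => x) := by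
  have := (p (k + 1)).toMultilinearMap.map_piecewise_sub_map_piecewise
    (fun _ => x) (fun _ => P x) (fun _ => 0) Finset.univ
  simp only [Finset.piecewise_univ, ContinuousMultilinearMap.coe_coe] at this
  rw [this]
  unfold divSeries
  rw [_root_.sum_apply, Finset.mul_sum]
  refine Finset.sum_congr rfl fun i _ => ?_
  rw [ContinuousMultilinearMap.compContinuousLinearMap_apply,
    ContinuousMultilinearMap.curryMid_apply]
  have h1 : (fun j : Fin (k + 1) => if j ∈ (Finset.univ : Finset (Fin (k + 1))) then
      if j < i then x else if j = i then x - P x else P x else 0)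
      = i.insertNth (l • e) (fun j : Fin k => 
        (if j.castSucc < i then ContinuousLinearMap.id ℝ E else P) x) := by
    rw [Fin.eq_insertNth_iff]
    refine ⟨by simp [hx], ?_⟩
    funext j
    simp only [Fin.removeNth, Finset.mem_univ, if_true]
    by_cases hj : j.castSucc < i
    · have : i.succAbove j < i := by rw [Fin.succAbove_of_castSucc_lt _ _ hj]; exact hj
      simp [hj, this]
    · have h2 : ¬ i.succAbove j < i := by
        rw [Fin.succAbove_of_le_castSucc _ _ (not_lt.1 hj)]
        simp only [not_lt] at hj ⊢
        exact hj.trans (Fin.castSucc_lt_succ).le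
      simp [hj, h2, Fin.succAbove_ne]
  have h2 := (p (k + 1)).toMultilinearMap.map_insertNth_smul i
    (fun j : Fin k => (if j.castSucc < i then ContinuousLinearMap.id ℝ E else P) x) l e
  simp only [ContinuousMultilinearMap.coe_coe, smul_eq_mul] at h2
  rw [← h2]
  congr 1

/-- Division lemma. -/
theorem division {E : Type*} [NormedAddCommGroup E] [NormedSpace ℝ E]
    {f : E → ℝ} (hf : AnalyticAt ℝ f 0) (P : E →L[ℝ] E) (e : E) (hP : ‖P‖ ≤ 1) (he : ‖e‖ ≤ 1)
    (l : E → ℝ) (hl : ∀ x, x - P x = l x • e) :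
    ∃ h : E → ℝ, AnalyticAt ℝ h 0 ∧ ∀ᶠ x in 𝓝 0, f x = f (P x) + l x * h x := by
  obtain ⟨p, r, hp⟩ := hf
  have hpr : 0 < p.radius := hp.r_pos.trans_le hp.r_le
  obtain ⟨C, a, hC, ha, hCa⟩ := p.le_mul_pow_of_radius_pos hpr
  set q := divSeries p P e with hq
  have hqb : ∀ k, ‖q k‖ ≤ (C * a) * (2 * a) ^ k := by
    intro k
    refine (divSeries_norm p P e hP he k).trans ?_
    have h1 : ((k : ℝ) + 1) ≤ 2 ^ k := by
      exact_mod_cast Nat.lt_two_pow_self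
    calc ((k : ℝ) + 1) * ‖p (k + 1)‖ ≤ 2 ^ k * (C * a ^ (k + 1)) := by
          gcongr; exact hCa _
      _ = _ := by rw [mul_pow]; ring
  have hqr : 0 < q.radius := by
    let ρ : NNReal := ⟨(2 * a)⁻¹, by positivity⟩
    have : (ρ : ENNReal) ≤ q.radius := by
      apply q.le_radius_of_bound (C * a)
      intro k
      change ‖q k‖ * ((2 * a)⁻¹) ^ k ≤ C * a
      calc ‖q k‖ * ((2 * a)⁻¹) ^ k ≤ (C * a) * (2 * a) ^ k * ((2 * a)⁻¹) ^ k := by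
            gcongr; exact hqb k
        _ = C * a := by rw [mul_assoc, ← mul_pow, mul_inv_cancel₀ (by positivity), one_pow, mul_one]
    refine lt_of_lt_of_le ?_ this
    rw [ENNReal.coe_pos]
    exact show (0:ℝ) < (2 * a)⁻¹ by positivity
  have hqs := q.hasFPowerSeriesOnBall hqr
  refine ⟨q.sum, ⟨q, _, hqs⟩, ?_⟩
  have hb1 : ∀ᶠ x in 𝓝 (0 : E), HasSum (fun n => p n fun _ => x) (f x) := by
    have := hp.eventually_hasSum
    simpa using this
  have hb2 : ∀ᶠ x in 𝓝 (0 : E), HasSum (fun n => p n fun _ => P x) (f (P x)) := by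
    have ht : Tendsto P (𝓝 0) (𝓝 0) := by simpa using P.continuous.tendsto 0
    exact ht.eventually hb1
  have hb3 : ∀ᶠ x in 𝓝 (0 : E), HasSum (fun n => q n fun _ => x) (q.sum x) := by
    have := hqs.eventually_hasSum
    simpa using this
  filter_upwards [hb1, hb2, hb3] with x h1 h2 h3
  have h4 := h1.sub h2
  have h5 := (hasSum_nat_add_iff' 1).2 h4
  have h6 : HasSum (fun n => l x * q n fun _ => x) (f x - f (P x)) := by
    have h0 : (p 0 fun _ => x) - (p 0 fun _ => P x) = 0 := by
      rw [sub_eq_zero]; congr 1; funext i; exact i.elim0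
    simp only [Finset.range_one, Finset.sum_singleton, h0, sub_zero] at h5
    have h7 : (fun n => l x * q n fun _ => x) =
        fun n => ((p (n + 1)) fun _ => x) - (p (n + 1)) fun _ => P x :=
      funext fun n => (divSeries_apply p P e (l x) x (hl x) n).symm
    rw [h7]
    exact h5
  have := h6.unique (h3.mul_left (l x))
  linarith

/-- Coordinate division. -/
theorem coord_division {ι : Type*} [Fintype ι] [DecidableEq ι] {f : (ι → ℝ) → ℝ}
    (hf : AnalyticAt ℝ f 0) (i : ι) :
    ∃ h : (ι → ℝ) → ℝ, AnalyticAt ℝ h 0 ∧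
      ∀ᶠ x in 𝓝 0, f x = f (Function.update x i 0) + x i * h x := by
  let P : (ι → ℝ) →L[ℝ] (ι → ℝ) :=
    ContinuousLinearMap.pi fun j => if j = i then 0 else ContinuousLinearMap.proj j
  have hPx : ∀ x, P x = Function.update x i 0 := by
    intro x; funext j
    by_cases hj : j = i
    · subst hj; simp [P]
    · simp [P, hj]
  obtain ⟨h, hh, he⟩ := division hf P (Pi.single i 1)
    (by
      refine ContinuousLinearMap.opNorm_le_bound _ zero_le_one fun x => ?_
      rw [one_mul, hPx, pi_norm_le_iff_of_nonneg (norm_nonneg _)]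
      intro j
      by_cases hj : j = i
      · subst hj; simp
      · simpa [hj] using norm_le_pi_norm x j)
    (by
      rw [pi_norm_le_iff_of_nonneg zero_le_one]
      intro j
      by_cases hj : j = i
      · subst hj; simp
      · simp [hj])
    (fun x => x i)
    (by
      intro x
      rw [hPx]
      funext j
      by_cases hj : j = i
      · subst hj; simp
      · simp [hj])
  refine ⟨h, hh, ?_⟩
  filter_upwards [he] with x hx
  rw [hx, hPx]

end Loj

namespace Loj

/-- normal crossing germ at `0`: monomial times a unit -/
def NC {ι : Type*} [Fintype ι] (f : (ι → ℝ) → ℝ) : Prop :=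
  ∃ (α : ι → ℕ) (u : (ι → ℝ) → ℝ), AnalyticAt ℝ u 0 ∧ u 0 ≠ 0 ∧
    ∀ᶠ x in 𝓝 0, f x = (∏ i, x i ^ α i) * u x

theorem analyticAt_coord {ι : Type*} [Fintype ι] (i : ι) (x₀ : ι → ℝ) :
    AnalyticAt ℝ (fun x : ι → ℝ => x i) x₀ :=
  (ContinuousLinearMap.proj (R := ℝ) (φ := fun _ : ι => ℝ) i).analyticAt x₀

theorem analyticAt_mono {ι : Type*} [Fintype ι] (α : ι → ℕ) (x₀ : ι → ℝ) :
    AnalyticAt ℝ (fun x : ι → ℝ => ∏ i, x i ^ α i) x₀ :=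
  Finset.analyticAt_fun_prod _ fun i _ => (analyticAt_coord i x₀).pow _

theorem NC.analyticAt {ι : Type*} [Fintype ι] {f : (ι → ℝ) → ℝ} (h : NC f) :
    AnalyticAt ℝ f 0 := by
  obtain ⟨α, u, hu, -, he⟩ := h
  refine ((analyticAt_mono α 0).mul hu).congr ?_
  filter_upwards [he] with x hx
  rw [hx]; rfl

theorem NC.congr {ι : Type*} [Fintype ι] {f g : (ι → ℝ) → ℝ} (h : NC f)
    (hfg : ∀ᶠ x in 𝓝 0, g x = f x) : NC g := by
  obtain ⟨α, u, hu, hu0, he⟩ := h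
  refine ⟨α, u, hu, hu0, ?_⟩
  filter_upwards [he, hfg] with x hx hx'
  rw [hx', hx]

theorem NC.of_unit {ι : Type*} [Fintype ι] {f : (ι → ℝ) → ℝ} (h : AnalyticAt ℝ f 0)
    (h0 : f 0 ≠ 0) : NC f :=
  ⟨fun _ => 0, f, h, h0, by simp⟩

theorem NC.mono {ι : Type*} [Fintype ι] (α : ι → ℕ) : NC (fun x : ι → ℝ => ∏ i, x i ^ α i) :=
  ⟨α, fun _ => 1, analyticAt_const, one_ne_zero, by simp⟩

theorem NC.coord {ι : Type*} [Fintype ι] (i : ι) : NC (fun x : ι → ℝ => x i) := by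
  classical
  refine (NC.mono (Pi.single i 1)).congr (Eventually.of_forall fun x => ?_)
  rw [Finset.prod_eq_single i]
  · simp
  · intro j _ hj; simp [hj]
  · simp

theorem NC.mul {ι : Type*} [Fintype ι] {f g : (ι → ℝ) → ℝ} (hf : NC f) (hg : NC g) :
    NC (fun x => f x * g x) := by
  obtain ⟨α, u, hu, hu0, he⟩ := hf
  obtain ⟨β, v, hv, hv0, he'⟩ := hg
  refine ⟨fun i => α i + β i, fun x => u x * v x, hu.mul hv, mul_ne_zero hu0 hv0, ?_⟩
  filter_upwards [he, he'] with x hx hx'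
  rw [hx, hx']
  simp only [pow_add, Finset.prod_mul_distrib]
  ring

theorem NC.one {ι : Type*} [Fintype ι] : NC (fun _ : ι → ℝ => (1 : ℝ)) :=
  NC.of_unit analyticAt_const one_ne_zero

theorem NC.pow {ι : Type*} [Fintype ι] {f : (ι → ℝ) → ℝ} (hf : NC f) (k : ℕ) :
    NC (fun x => f x ^ k) := by
  induction k with
  | zero => simpa using NC.one
  | succ k ih => simpa [pow_succ] using ih.mul hf

theorem NC.prod {ι κ : Type*} [Fintype ι] (s : Finset κ) {f : κ → (ι → ℝ) → ℝ}
    (hf : ∀ k ∈ s, NC (f k)) : NC (fun x => ∏ k ∈ s, f k x) := by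
  classical
  induction s using Finset.induction_on with
  | empty => simpa using NC.one
  | insert a s ha ih =>
    simp only [Finset.prod_insert ha]
    exact (hf a (by simp)).mul (ih fun k hk => hf k (by simp [hk]))

theorem NC.comp {ι κ : Type*} [Fintype ι] [Fintype κ] {f : (ι → ℝ) → ℝ} (hf : NC f)
    {π : (κ → ℝ) → (ι → ℝ)} (hπ : AnalyticAt ℝ π 0) (h0 : π 0 = 0)
    (hc : ∀ i, NC (fun x => π x i)) : NC (fun x => f (π x)) := by
  obtain ⟨α, u, hu, hu0, he⟩ := hf
  have h1 : NC (fun x => ∏ i, π x i ^ α i) := NC.prod _ fun i _ => (hc i).pow _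
  have h2 : NC (fun x => u (π x)) := by
    refine NC.of_unit (AnalyticAt.comp (g := u) (by rw [h0]; exact hu) hπ) ?_
    rw [h0]; exact hu0
  refine (h1.mul h2).congr ?_
  have ht : Tendsto π (𝓝 0) (𝓝 0) := by simpa [h0] using hπ.continuousAt.tendsto
  exact ht.eventually he

theorem coord_not_zero {ι : Type*} [Fintype ι] (i : ι) :
    ¬ ∀ᶠ x in 𝓝 (0 : ι → ℝ), x i = 0 := by
  classical
  intro h
  have ht : Tendsto (fun t : ℝ => (Pi.single i t : ι → ℝ)) (𝓝 0) (𝓝 0) := by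
    have : Continuous (fun t : ℝ => (Pi.single i t : ι → ℝ)) :=
      (ContinuousLinearMap.single ℝ (fun _ : ι => ℝ) i).continuous
    simpa using this.tendsto 0
  have h2 := ht.eventually h
  simp only [Pi.single_eq_same] at h2
  obtain ⟨r, hr, hb⟩ := Metric.eventually_nhds_iff_ball.1 h2
  have := hb (r / 2) (by simp [abs_of_pos hr, hr])
  linarith

theorem NC.not_zero {ι : Type*} [Fintype ι] {f : (ι → ℝ) → ℝ} (hf : NC f) :
    ¬ ∀ᶠ x in 𝓝 (0 : ι → ℝ), f x = 0 := by
  classical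
  intro h
  obtain ⟨α, u, hu, hu0, he⟩ := hf
  have hu1 := hu.continuousAt.eventually_ne hu0
  have hm : ∀ s : Finset ι, ¬ ∀ᶠ x in 𝓝 (0 : ι → ℝ), ∏ i ∈ s, x i ^ α i = 0 := by
    intro s
    induction s using Finset.induction_on with
    | empty => intro h'; simpa using h'.self_of_nhds
    | insert a s ha ih =>
      intro h
      simp only [Finset.prod_insert ha] at h
      rcases eventually_zero_or ((analyticAt_coord a 0).pow _)
        (Finset.analyticAt_fun_prod _ fun i _ => (analyticAt_coord i 0).pow _) h with h | h
      · refine coord_not_zero a ?_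
        filter_upwards [h] with x hx
        exact eq_zero_of_pow_eq_zero hx
      · exact ih h
  apply hm Finset.univ
  filter_upwards [h, he, hu1] with x h1 h2 h3
  rw [h1] at h2
  simpa [h3] using h2.symm

theorem analyticAt_update {ι : Type*} [Fintype ι] [DecidableEq ι] (i : ι) (x₀ : ι → ℝ) :
    AnalyticAt ℝ (fun x : ι → ℝ => Function.update x i 0) x₀ := by
  refine analyticAt_pi_iff.2 fun j => ?_
  by_cases hj : j = i
  · subst hj; simpa using analyticAt_const
  · simpa [hj] using analyticAt_coord j x₀

theorem factor_aux {ι : Type*} [Fintype ι] (N : ℕ) : ∀ (α : ι → ℕ) (f g u : (ι → ℝ) → ℝ),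
    ∑ i, α i = N → AnalyticAt ℝ f 0 → AnalyticAt ℝ g 0 → AnalyticAt ℝ u 0 → u 0 ≠ 0 →
    (∀ᶠ x in 𝓝 0, f x * g x = (∏ i, x i ^ α i) * u x) → NC f ∧ NC g := by
  classical
  induction N with
  | zero =>
    intro α f g u hα hf hg hu hu0 he
    have hα0 : ∀ i, α i = 0 := by simpa using hα
    have h0 := he.self_of_nhds
    simp only [hα0, pow_zero, Finset.prod_const_one, one_mul] at h0
    rw [← h0] at hu0
    exact ⟨NC.of_unit hf (left_ne_zero_of_mul hu0), NC.of_unit hg (right_ne_zero_of_mul hu0)⟩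
  | succ N ih =>
    intro α f g u hα hf hg hu hu0 he
    obtain ⟨i, hi⟩ : ∃ i, α i ≠ 0 := by
      by_contra! h
      simp [h] at hα
    obtain ⟨k, hk⟩ := Nat.exists_eq_succ_of_ne_zero hi
    set α' : ι → ℕ := Function.update α i k with hα'
    have hsum : ∑ j, α' j = N := by
      have h1 := Finset.add_sum_erase Finset.univ α (Finset.mem_univ i)
      have h2 := Finset.add_sum_erase Finset.univ α' (Finset.mem_univ i)
      have h3 : ∑ j ∈ Finset.univ.erase i, α' j = ∑ j ∈ Finset.univ.erase i, α j := by
        refine Finset.sum_congr rfl fun j hj => ?_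
        simp [hα', Finset.ne_of_mem_erase hj]
      have h4 : α' i = k := by simp [hα']
      omega
    have hprod : ∀ x : ι → ℝ, ∏ j, x j ^ α j = x i * ∏ j, x j ^ α' j := by
      intro x
      rw [← Finset.mul_prod_erase Finset.univ _ (Finset.mem_univ i),
        ← Finset.mul_prod_erase Finset.univ (fun j => x j ^ α' j) (Finset.mem_univ i)]
      have h3 : ∏ j ∈ Finset.univ.erase i, x j ^ α' j = ∏ j ∈ Finset.univ.erase i, x j ^ α j := by
        refine Finset.prod_congr rfl fun j hj => ?_
        simp [hα', Finset.ne_of_mem_erase hj]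
      have h4 : α' i = k := by simp [hα']
      rw [h3, h4, hk, pow_succ]; ring
    have hup := analyticAt_update i (0 : ι → ℝ)
    have hu00 : Function.update (0 : ι → ℝ) i 0 = 0 := by simp
    have hupt : Tendsto (fun x : ι → ℝ => Function.update x i 0) (𝓝 0) (𝓝 0) := by
      simpa [hu00] using hup.continuousAt.tendsto
    have hz : ∀ᶠ x in 𝓝 (0 : ι → ℝ),
        f (Function.update x i 0) * g (Function.update x i 0) = 0 := by
      filter_upwards [hupt.eventually he] with x hx
      rw [hx, hprod]; simp
    have key : ∀ f g : (ι → ℝ) → ℝ, AnalyticAt ℝ f 0 → AnalyticAt ℝ g 0 →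
        (∀ᶠ x in 𝓝 0, f x * g x = (∏ i, x i ^ α i) * u x) →
        (∀ᶠ x in 𝓝 (0 : ι → ℝ), f (Function.update x i 0) = 0) → NC f ∧ NC g := by
      intro f g hf hg he hz
      obtain ⟨f', hf', hff'⟩ := coord_division hf i
      have h1 : ∀ᶠ x in 𝓝 (0 : ι → ℝ),
          x i * (f' x * g x - (∏ j, x j ^ α' j) * u x) = 0 := by
        filter_upwards [he, hz, hff'] with x h1 h2 h3
        rw [h3, h2, hprod] at h1
        linear_combination h1
      rcases eventually_zero_or (analyticAt_coord i 0)
        ((hf'.mul hg).sub ((analyticAt_mono α' 0).mul hu)) h1 with h | h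
      · exact (coord_not_zero i h).elim
      · obtain ⟨h2, h3⟩ := ih α' f' g u hsum hf' hg hu hu0 (by
          filter_upwards [h] with x hx
          simpa [sub_eq_zero] using hx)
        refine ⟨((NC.coord i).mul h2).congr ?_, h3⟩
        filter_upwards [hff', hz] with x h4 h5
        rw [h4, h5, zero_add]
    rcases eventually_zero_or (f := fun x => f (Function.update x i 0))
      (g := fun x => g (Function.update x i 0))
      (AnalyticAt.comp (g := f) (by rw [hu00]; exact hf) hup)
      (AnalyticAt.comp (g := g) (by rw [hu00]; exact hg) hup) hz with h | h
    · exact key f g hf hg he h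
    · refine (key g f hg hf ?_ h).symm
      filter_upwards [he] with x hx
      rw [mul_comm, hx]

theorem NC.factor {ι : Type*} [Fintype ι] {f g : (ι → ℝ) → ℝ} (hf : AnalyticAt ℝ f 0)
    (hg : AnalyticAt ℝ g 0) (h : NC (fun x => f x * g x)) : NC f ∧ NC g := by
  obtain ⟨α, u, hu, hu0, he⟩ := h
  exact factor_aux _ α f g u rfl hf hg hu hu0 he

theorem NC.factor_prod {ι κ : Type*} [Fintype ι] (s : Finset κ) {f : κ → (ι → ℝ) → ℝ}
    (hf : ∀ k ∈ s, AnalyticAt ℝ (f k) 0) (h : NC (fun x => ∏ k ∈ s, f k x)) :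
    ∀ k ∈ s, NC (f k) := by
  classical
  intro k hk
  have h2 : NC (fun x => f k x * ∏ j ∈ s.erase k, f j x) := by
    refine h.congr (Eventually.of_forall fun x => ?_)
    exact Finset.mul_prod_erase s (fun j => f j x) hk
  exact (NC.factor (hf k hk) (Finset.analyticAt_fun_prod _ fun j hj =>
    hf j (Finset.mem_of_mem_erase hj)) h2).1

theorem prod_not_zero {ι κ : Type*} [Fintype ι] (s : Finset κ) {f : κ → (ι → ℝ) → ℝ}
    (hf : ∀ k ∈ s, AnalyticAt ℝ (f k) 0) (h : ∀ k ∈ s, ¬ ∀ᶠ x in 𝓝 (0 : ι → ℝ), f k x = 0) :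
    ¬ ∀ᶠ x in 𝓝 (0 : ι → ℝ), ∏ k ∈ s, f k x = 0 := by
  classical
  induction s using Finset.induction_on with
  | empty => intro h'; simpa using h'.self_of_nhds
  | insert a s ha ih =>
    intro h'
    simp only [Finset.prod_insert ha] at h'
    rcases eventually_zero_or (hf a (by simp))
      (Finset.analyticAt_fun_prod _ fun i hi => hf i (by simp [hi])) h' with h1 | h1
    · exact h a (by simp) h1
    · exact ih (fun k hk => hf k (by simp [hk])) (fun k hk => h k (by simp [hk])) h1

end Loj

namespace Loj

/-- `b` is a lift of `a` through the analytic germ `π`, along the ultrafilter `𝓤`. -/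
structure Up {X ι κ : Type*} [Fintype ι] [Fintype κ] (𝓤 : Ultrafilter X) (a : X → ι → ℝ)
    (π : (κ → ℝ) → (ι → ℝ)) (b : X → κ → ℝ) : Prop where
  an : AnalyticAt ℝ π 0
  map0 : π 0 = 0
  tend : Tendsto b 𝓤 (𝓝 0)
  eq : ∀ᶠ x in (𝓤 : Filter X), π (b x) = a x

theorem Up.comp {X ι κ μ : Type*} [Fintype ι] [Fintype κ] [Fintype μ] {𝓤 : Ultrafilter X}
    {a : X → ι → ℝ} {π : (κ → ℝ) → (ι → ℝ)} {b : X → κ → ℝ} {π' : (μ → ℝ) → (κ → ℝ)}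
    {c : X → μ → ℝ} (h : Up 𝓤 a π b) (h' : Up 𝓤 b π' c) : Up 𝓤 a (fun x => π (π' x)) c where
  an := AnalyticAt.comp (g := π) (by rw [h'.map0]; exact h.an) h'.an
  map0 := by rw [h'.map0, h.map0]
  tend := h'.tend
  eq := by
    filter_upwards [h.eq, h'.eq] with x h1 h2
    rw [h2, h1]

theorem Up.tendsto {X ι κ : Type*} [Fintype ι] [Fintype κ] {𝓤 : Ultrafilter X}
    {a : X → ι → ℝ} {π : (κ → ℝ) → (ι → ℝ)} {b : X → κ → ℝ} (h : Up 𝓤 a π b) :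
    Tendsto π (𝓝 0) (𝓝 0) := by
  simpa [h.map0] using h.an.continuousAt.tendsto

theorem Up.comp_analytic {X ι κ : Type*} [Fintype ι] [Fintype κ] {𝓤 : Ultrafilter X}
    {a : X → ι → ℝ} {π : (κ → ℝ) → (ι → ℝ)} {b : X → κ → ℝ} (h : Up 𝓤 a π b)
    {f : (ι → ℝ) → ℝ} (hf : AnalyticAt ℝ f 0) : AnalyticAt ℝ (fun x => f (π x)) 0 :=
  AnalyticAt.comp (g := f) (by rw [h.map0]; exact hf) h.an

theorem Up.refl {X ι : Type*} [Fintype ι] {𝓤 : Ultrafilter X} {a : X → ι → ℝ}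
    (ha : Tendsto a 𝓤 (𝓝 0)) : Up 𝓤 a (fun x => x) a where
  an := analyticAt_id
  map0 := rfl
  tend := ha
  eq := by simp

/-- lifts through monomial type maps -/
structure MM {X ι κ : Type*} [Fintype ι] [Fintype κ] (𝓤 : Ultrafilter X) (a : X → ι → ℝ)
    (π : (κ → ℝ) → (ι → ℝ)) (b : X → κ → ℝ) : Prop extends Up 𝓤 a π b where
  nc : ∀ i, NC (fun x => π x i)

theorem MM.comp_nc {X ι κ : Type*} [Fintype ι] [Fintype κ] {𝓤 : Ultrafilter X}
    {a : X → ι → ℝ} {π : (κ → ℝ) → (ι → ℝ)} {b : X → κ → ℝ} (h : MM 𝓤 a π b)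
    {f : (ι → ℝ) → ℝ} (hf : NC f) : NC (fun x => f (π x)) :=
  hf.comp h.an h.map0 h.nc

theorem MM.comp {X ι κ μ : Type*} [Fintype ι] [Fintype κ] [Fintype μ] {𝓤 : Ultrafilter X}
    {a : X → ι → ℝ} {π : (κ → ℝ) → (ι → ℝ)} {b : X → κ → ℝ} {π' : (μ → ℝ) → (κ → ℝ)}
    {c : X → μ → ℝ} (h : MM 𝓤 a π b) (h' : MM 𝓤 b π' c) : MM 𝓤 a (fun x => π (π' x)) c where
  toUp := h.toUp.comp h'.toUp
  nc := fun i => h'.comp_nc (h.nc i)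

theorem MM.refl {X ι : Type*} [Fintype ι] {𝓤 : Ultrafilter X} {a : X → ι → ℝ}
    (ha : Tendsto a 𝓤 (𝓝 0)) : MM 𝓤 a (fun x => x) a where
  toUp := Up.refl ha
  nc := NC.coord

/-- divisibility with normal crossing quotient -/
def Dv {ι : Type*} [Fintype ι] (f g : (ι → ℝ) → ℝ) : Prop :=
  ∃ q, NC q ∧ ∀ᶠ x in 𝓝 0, g x = f x * q x

theorem Dv.refl {ι : Type*} [Fintype ι] (f : (ι → ℝ) → ℝ) : Dv f f :=
  ⟨fun _ => 1, NC.one, by simp⟩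

theorem Dv.trans {ι : Type*} [Fintype ι] {f g h : (ι → ℝ) → ℝ} (h1 : Dv f g) (h2 : Dv g h) :
    Dv f h := by
  obtain ⟨q, hq, he⟩ := h1
  obtain ⟨r, hr, he'⟩ := h2
  refine ⟨_, hq.mul hr, ?_⟩
  filter_upwards [he, he'] with x h1 h2
  rw [h2, h1]; ring

theorem Dv.comp {X ι κ : Type*} [Fintype ι] [Fintype κ] {𝓤 : Ultrafilter X}
    {a : X → ι → ℝ} {π : (κ → ℝ) → (ι → ℝ)} {b : X → κ → ℝ} {f g : (ι → ℝ) → ℝ} (hd : Dv f g)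
    (h : MM 𝓤 a π b) :
    Dv (fun x => f (π x)) (fun x => g (π x)) := by
  obtain ⟨q, hq, he⟩ := hd
  exact ⟨_, h.comp_nc hq, h.tendsto.eventually he⟩

theorem Dv.unit {ι : Type*} [Fintype ι] {f g f' g' u v : (ι → ℝ) → ℝ} (hd : Dv f g)
    (hu : AnalyticAt ℝ u 0) (hu0 : u 0 ≠ 0) (hv : AnalyticAt ℝ v 0) (hv0 : v 0 ≠ 0)
    (hf : ∀ᶠ x in 𝓝 0, f' x = f x * u x) (hg : ∀ᶠ x in 𝓝 0, g' x = g x * v x) : Dv f' g' := by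
  obtain ⟨q, hq, he⟩ := hd
  have h1 : NC (fun x => v x * (u x)⁻¹) :=
    NC.of_unit (hv.mul (hu.inv hu0)) (mul_ne_zero hv0 (inv_ne_zero hu0))
  refine ⟨_, hq.mul h1, ?_⟩
  filter_upwards [he, hf, hg, hu.continuousAt.eventually_ne hu0] with x h1 h2 h3 h4
  rw [h3, h2, h1]; field_simp

/-- Ramification. -/
theorem ramify {X ι : Type*} [Fintype ι] {𝓤 : Ultrafilter X} {a : X → ι → ℝ}
    (ha : Tendsto a 𝓤 (𝓝 0)) (D : ι → ℕ) (hD : ∀ i, 0 < D i) :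
    ∃ (s : ι → ℝ) (b : X → ι → ℝ), (∀ i, s i ≠ 0) ∧ MM 𝓤 a (fun x i => s i * x i ^ D i) b := by
  have hs : ∀ i, ∃ s : ℝ, s ≠ 0 ∧ ∀ᶠ x in (𝓤 : Filter X), s * |a x i| = a x i := by
    intro i
    rcases Ultrafilter.em 𝓤 (fun x => 0 ≤ a x i) with h | h
    · refine ⟨1, one_ne_zero, ?_⟩
      filter_upwards [h] with x hx
      rw [abs_of_nonneg hx, one_mul]
    · refine ⟨-1, by norm_num, ?_⟩
      filter_upwards [h] with x hx
      rw [abs_of_neg (not_le.1 hx)]; ring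
  choose s hs0 hs1 using hs
  refine ⟨s, fun x i => |a x i| ^ ((D i : ℝ)⁻¹), hs0, ⟨⟨?_, ?_, ?_, ?_⟩, ?_⟩⟩
  · refine analyticAt_pi_iff.2 fun i => ?_
    exact analyticAt_const.mul ((analyticAt_coord i 0).pow _)
  · funext i
    simp [(hD i).ne']
  · refine tendsto_pi_nhds.2 fun i => ?_
    have h1 : Tendsto (fun x => |a x i|) 𝓤 (𝓝 0) := by
      have := (tendsto_pi_nhds.1 ha i).abs
      simpa using this
    have h2 := h1.rpow_const (p := (D i : ℝ)⁻¹) (Or.inr (by positivity))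
    have : (D i : ℝ)⁻¹ ≠ 0 := by
      have := hD i
      positivity
    simpa [Real.zero_rpow this] using h2
  · have : ∀ᶠ x in (𝓤 : Filter X), ∀ i, s i * |a x i| = a x i := eventually_all.2 hs1
    filter_upwards [this] with x hx
    funext i
    rw [Real.rpow_inv_natCast_pow (abs_nonneg _) (hD i).ne', hx]
  · intro i
    exact (NC.of_unit analyticAt_const (hs0 i)).mul ((NC.coord i).pow _)

theorem ultra_limit {X : Type*} {𝓤 : Ultrafilter X} {r : X → ℝ} {M : ℝ}
    (h : ∀ᶠ x in (𝓤 : Filter X), |r x| ≤ M) : ∃ c, Tendsto r 𝓤 (𝓝 c) := by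
  have hK : IsCompact (Set.Icc (-M) M) := isCompact_Icc
  obtain ⟨c, -, hc⟩ := hK.ultrafilter_le_nhds (𝓤.map r) (by
    rw [le_principal_iff]
    change ∀ᶠ x in (𝓤 : Filter X), r x ∈ Set.Icc (-M) M
    filter_upwards [h] with x hx
    exact abs_le.1 hx)
  exact ⟨c, hc⟩

/-- Blow-up chart. -/
theorem blowup {X ι : Type*} [Fintype ι] [DecidableEq ι] {𝓤 : Ultrafilter X} {a : X → ι → ℝ}
    (ha : Tendsto a 𝓤 (𝓝 0)) (i j : ι) (hij : i ≠ j)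
    (h : ∀ᶠ x in (𝓤 : Filter X), |a x i| ≤ |a x j|) :
    ∃ (c : ℝ) (b : X → ι → ℝ),
      MM 𝓤 a (fun x => Function.update x i ((c + x i) * x j)) b := by
  obtain ⟨c, hc⟩ := ultra_limit (𝓤 := 𝓤) (r := fun x => a x i / a x j) (M := 1) (by
    filter_upwards [h] with x hx
    rw [abs_div]
    exact div_le_one_of_le₀ hx (abs_nonneg _))
  refine ⟨c, fun x => Function.update (a x) i (a x i / a x j - c), ⟨⟨?_, ?_, ?_, ?_⟩, ?_⟩⟩
  · refine analyticAt_pi_iff.2 fun k => ?_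
    by_cases hk : k = i
    · subst hk
      simp only [Function.update_self]
      exact (analyticAt_const.add (analyticAt_coord k 0)).mul (analyticAt_coord j 0)
    · simpa [hk] using analyticAt_coord k 0
  · simp
  · refine tendsto_pi_nhds.2 fun k => ?_
    by_cases hk : k = i
    · subst hk
      simpa using hc.sub_const c
    · simpa [hk] using tendsto_pi_nhds.1 ha k
  · filter_upwards [h] with x hx
    funext k
    by_cases hk : k = i
    · subst hk
      simp only [Function.update_self, Function.update_of_ne hij.symm]
      by_cases h0 : a x j = 0
      · have : a x k = 0 := by simpa [h0] using hx
        simp [this, h0]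
      · field_simp; ring
    · simp [hk]
  · intro k
    by_cases hk : k = i
    · subst hk
      simp only [Function.update_self]
      refine NC.mul ?_ (NC.coord j)
      by_cases hc0 : c = 0
      · simpa [hc0] using NC.coord k
      · exact NC.of_unit (analyticAt_const.add (analyticAt_coord k 0)) (by simpa using hc0)
    · simpa [hk] using NC.coord k

theorem blowup_mono {ι : Type*} [Fintype ι] [DecidableEq ι] (i j : ι) (hij : i ≠ j) (c : ℝ)
    (α β : ι → ℕ) (hs : α i + α j = β i + β j) :
    ∃ (α' β' : ι → ℕ) (u v : (ι → ℝ) → ℝ), AnalyticAt ℝ u 0 ∧ u 0 ≠ 0 ∧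
      AnalyticAt ℝ v 0 ∧ v 0 ≠ 0 ∧
      (∀ x : ι → ℝ, ∏ k, (Function.update x i ((c + x i) * x j)) k ^ α k =
        (∏ k, x k ^ α' k) * u x) ∧
      (∀ x : ι → ℝ, ∏ k, (Function.update x i ((c + x i) * x j)) k ^ β k =
        (∏ k, x k ^ β' k) * v x) ∧ α' j = β' j ∧ ∀ k, α k = β k → α' k = β' k := by
  have hgen : ∀ (α : ι → ℕ) (x : ι → ℝ),
      ∏ k, (Function.update x i ((c + x i) * x j)) k ^ α k =
      (c + x i) ^ α i * x j ^ (α i + α j) * ∏ k ∈ (Finset.univ.erase i).erase j, x k ^ α k := by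
    intro α x
    rw [← Finset.mul_prod_erase Finset.univ _ (Finset.mem_univ i),
      ← Finset.mul_prod_erase (Finset.univ.erase i) _ (by simp [hij.symm] : j ∈ Finset.univ.erase i)]
    have : ∏ k ∈ (Finset.univ.erase i).erase j, (Function.update x i ((c + x i) * x j)) k ^ α k
        = ∏ k ∈ (Finset.univ.erase i).erase j, x k ^ α k := by
      refine Finset.prod_congr rfl fun k hk => ?_
      have : k ≠ i := by
        simp at hk; exact hk.2
      rw [Function.update_of_ne this]
    rw [this, Function.update_self, Function.update_of_ne hij.symm, mul_pow, pow_add]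
    ring
  have hgen2 : ∀ (α : ι → ℕ) (m : ℕ) (x : ι → ℝ),
      ∏ k, x k ^ (Function.update (Function.update α j (α i + α j)) i m) k =
      x i ^ m * x j ^ (α i + α j) * ∏ k ∈ (Finset.univ.erase i).erase j, x k ^ α k := by
    intro α m x
    rw [← Finset.mul_prod_erase Finset.univ _ (Finset.mem_univ i),
      ← Finset.mul_prod_erase (Finset.univ.erase i) _ (by simp [hij.symm] : j ∈ Finset.univ.erase i)]
    have : ∏ k ∈ (Finset.univ.erase i).erase j,
        x k ^ (Function.update (Function.update α j (α i + α j)) i m) k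
        = ∏ k ∈ (Finset.univ.erase i).erase j, x k ^ α k := by
      refine Finset.prod_congr rfl fun k hk => ?_
      simp at hk
      rw [Function.update_of_ne hk.2, Function.update_of_ne hk.1]
    rw [this, Function.update_self, Function.update_of_ne hij.symm, Function.update_self]
    ring
  by_cases hc : c = 0
  · refine ⟨Function.update (Function.update α j (α i + α j)) i (α i),
      Function.update (Function.update β j (β i + β j)) i (β i), fun _ => 1, fun _ => 1,
      analyticAt_const, one_ne_zero, analyticAt_const, one_ne_zero, ?_, ?_, ?_, ?_⟩
    · intro x; rw [hgen, hgen2, hc]; ring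
    · intro x; rw [hgen, hgen2, hc]; ring
    · simp [Function.update_of_ne hij.symm, hs]
    · intro k hk
      by_cases h1 : k = i
      · subst h1; simpa using hk
      · by_cases h2 : k = j
        · subst h2; simpa [h1] using hs
        · simpa [h1, h2] using hk
  · refine ⟨Function.update (Function.update α j (α i + α j)) i 0,
      Function.update (Function.update β j (β i + β j)) i 0,
      fun x => (c + x i) ^ α i, fun x => (c + x i) ^ β i,
      (analyticAt_const.add (analyticAt_coord i 0)).pow _, by simp [hc],
      (analyticAt_const.add (analyticAt_coord i 0)).pow _, by simp [hc], ?_, ?_, ?_, ?_⟩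
    · intro x; rw [hgen, hgen2]; ring
    · intro x; rw [hgen, hgen2]; ring
    · simp [Function.update_of_ne hij.symm, hs]
    · intro k hk
      by_cases h1 : k = i
      · subst h1; simp
      · by_cases h2 : k = j
        · subst h2; simpa [h1] using hs
        · simpa [h1, h2] using hk

end Loj

namespace Loj

theorem ramify_mono {ι : Type*} [Fintype ι] (s x : ι → ℝ) (D α : ι → ℕ) :
    ∏ k, (s k * x k ^ D k) ^ α k = (∏ k, x k ^ (D k * α k)) * ∏ k, s k ^ α k := by
  rw [← Finset.prod_mul_distrib]
  refine Finset.prod_congr rfl fun k _ => ?_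
  rw [mul_pow, ← pow_mul]; ring

theorem toric_mono {X ι : Type*} [Fintype ι] [DecidableEq ι] {𝓤 : Ultrafilter X} (N : ℕ) :
    ∀ (a : X → ι → ℝ) (α β : ι → ℕ), Tendsto a 𝓤 (𝓝 0) →
      (Finset.univ.filter fun k => α k ≠ β k).card = N →
      ∃ (π : (ι → ℝ) → (ι → ℝ)) (b : X → ι → ℝ), MM 𝓤 a π b ∧
      (Dv (fun x => ∏ k, π x k ^ α k) (fun x => ∏ k, π x k ^ β k) ∨
        Dv (fun x => ∏ k, π x k ^ β k) (fun x => ∏ k, π x k ^ α k)) := by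
  induction N using Nat.strong_induction_on with
  | _ N ih =>
  intro a α β ha hN
  have hle : ∀ α β : ι → ℕ, (∀ k, α k ≤ β k) →
      Dv (fun x : ι → ℝ => ∏ k, x k ^ α k) (fun x => ∏ k, x k ^ β k) := by
    intro α β h
    refine ⟨_, NC.mono (fun k => β k - α k), Eventually.of_forall fun x => ?_⟩
    simp only
    rw [← Finset.prod_mul_distrib]
    refine Finset.prod_congr rfl fun k _ => ?_
    rw [← pow_add, Nat.add_sub_cancel' (h k)]
  by_cases h1 : ∀ k, α k ≤ β k
  · exact ⟨_, _, MM.refl ha, Or.inl (hle α β h1)⟩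
  by_cases h2 : ∀ k, β k ≤ α k
  · exact ⟨_, _, MM.refl ha, Or.inr (hle β α h2)⟩
  push Not at h1 h2
  obtain ⟨i, hi⟩ := h1
  obtain ⟨j, hj⟩ := h2
  have hij : i ≠ j := by rintro rfl; omega
  set D : ι → ℕ := fun k => if k = i then β j - α j else if k = j then α i - β i else 1 with hD
  have hDi : D i = β j - α j := by simp [hD]
  have hDj : D j = α i - β i := by simp [hD, hij.symm]
  have hDpos : ∀ k, 0 < D k := by
    intro k
    simp only [hD]
    split_ifs <;> omega
  obtain ⟨s, b, hs, hb⟩ := ramify ha D hDpos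
  set α₁ : ι → ℕ := fun k => D k * α k with hα₁
  set β₁ : ι → ℕ := fun k => D k * β k with hβ₁
  have hsum : α₁ i + α₁ j = β₁ i + β₁ j := by
    simp only [hα₁, hβ₁, hDi, hDj]
    obtain ⟨p, hp⟩ := Nat.exists_eq_add_of_lt hi
    obtain ⟨q, hq⟩ := Nat.exists_eq_add_of_lt hj
    have e1 : β j - α j = q + 1 := by omega
    have e2 : α i - β i = p + 1 := by omega
    rw [e1, e2, hp, hq]; ring
  have hsub : ∀ (i j : ι), i ≠ j → α₁ i + α₁ j = β₁ i + β₁ j → α j ≠ β j →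
      (∀ᶠ x in (𝓤 : Filter X), |b x i| ≤ |b x j|) →
      ∃ (π : (ι → ℝ) → (ι → ℝ)) (b : X → ι → ℝ), MM 𝓤 a π b ∧
      (Dv (fun x => ∏ k, π x k ^ α k) (fun x => ∏ k, π x k ^ β k) ∨
        Dv (fun x => ∏ k, π x k ^ β k) (fun x => ∏ k, π x k ^ α k)) := by
    intro i j hij hsum hjne hbij
    obtain ⟨c, b', hb'⟩ := blowup hb.tend i j hij hbij
    obtain ⟨α', β', u, v, hu, hu0, hv, hv0, hα', hβ', hj', hk'⟩ :=
      blowup_mono i j hij c α₁ β₁ hsum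
    have hcard : (Finset.univ.filter fun k => α' k ≠ β' k).card < N := by
      rw [← hN]
      apply Finset.card_lt_card
      refine ⟨fun k hk => ?_, fun hsub => ?_⟩
      · simp only [Finset.mem_filter, Finset.mem_univ, true_and] at hk ⊢
        intro h
        exact hk (hk' k (by simp only [hα₁, hβ₁, h]))
      · have := hsub (by simpa using hjne : j ∈ _)
        simp [hj'] at this
    obtain ⟨π, b'', hπ, hor⟩ := ih _ hcard b' α' β' hb'.tend rfl
    have hall := (hb.comp hb').comp hπ
    refine ⟨_, b'', hall, ?_⟩
    have hS : ∀ γ : ι → ℕ, ∏ k, s k ^ γ k ≠ 0 := fun γ =>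
      Finset.prod_ne_zero_iff.2 fun k _ => pow_ne_zero _ (hs k)
    have hA : ∀ x : ι → ℝ, (∏ k, (s k * (Function.update (π x) i ((c + π x i) * π x j) k) ^ D k)
        ^ α k) = (∏ k, π x k ^ α' k) * (u (π x) * ∏ k, s k ^ α k) := by
      intro x
      rw [ramify_mono]
      change (∏ k, _ ^ α₁ k) * _ = _
      rw [hα', mul_assoc]
    have hB : ∀ x : ι → ℝ, (∏ k, (s k * (Function.update (π x) i ((c + π x i) * π x j) k) ^ D k)
        ^ β k) = (∏ k, π x k ^ β' k) * (v (π x) * ∏ k, s k ^ β k) := by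
      intro x
      rw [ramify_mono]
      change (∏ k, _ ^ β₁ k) * _ = _
      rw [hβ', mul_assoc]
    have hU : AnalyticAt ℝ (fun x => u (π x) * ∏ k, s k ^ α k) 0 :=
      (hπ.comp_analytic hu).mul analyticAt_const
    have hV : AnalyticAt ℝ (fun x => v (π x) * ∏ k, s k ^ β k) 0 :=
      (hπ.comp_analytic hv).mul analyticAt_const
    have hU0 : u (π 0) * ∏ k, s k ^ α k ≠ 0 := by
      rw [hπ.map0]; exact mul_ne_zero hu0 (hS α)
    have hV0 : v (π 0) * ∏ k, s k ^ β k ≠ 0 := by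
      rw [hπ.map0]; exact mul_ne_zero hv0 (hS β)
    rcases hor with h | h
    · exact Or.inl (h.unit hU hU0 hV hV0 (Eventually.of_forall hA) (Eventually.of_forall hB))
    · exact Or.inr (h.unit hV hV0 hU hU0 (Eventually.of_forall hB) (Eventually.of_forall hA))
  rcases Ultrafilter.em 𝓤 (fun x => |b x i| ≤ |b x j|) with h | h
  · exact hsub i j hij hsum (by omega) h
  · refine hsub j i hij.symm (by omega) (by omega) ?_
    filter_upwards [h] with x hx
    exact (not_le.1 hx).le

theorem toric {X ι : Type*} [Fintype ι] {𝓤 : Ultrafilter X}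
    {a : X → ι → ℝ} (ha : Tendsto a 𝓤 (𝓝 0)) {f g : (ι → ℝ) → ℝ} (hf : NC f) (hg : NC g) :
    ∃ (π : (ι → ℝ) → (ι → ℝ)) (b : X → ι → ℝ), MM 𝓤 a π b ∧
      (Dv (fun x => f (π x)) (fun x => g (π x)) ∨ Dv (fun x => g (π x)) (fun x => f (π x))) := by
  classical
  obtain ⟨α, u, hu, hu0, hfe⟩ := hf
  obtain ⟨β, v, hv, hv0, hge⟩ := hg
  obtain ⟨π, b, hπ, hor⟩ := toric_mono (𝓤 := 𝓤) _ a α β ha rfl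
  refine ⟨π, b, hπ, ?_⟩
  have hU := hπ.comp_analytic hu
  have hV := hπ.comp_analytic hv
  have hU0 : u (π 0) ≠ 0 := by rw [hπ.map0]; exact hu0
  have hV0 : v (π 0) ≠ 0 := by rw [hπ.map0]; exact hv0
  have hA := hπ.tendsto.eventually hfe
  have hB := hπ.tendsto.eventually hge
  rcases hor with h | h
  · exact Or.inl (h.unit hU hU0 hV hV0 hA hB)
  · exact Or.inr (h.unit hV hV0 hU hU0 hB hA)

theorem toric_min {X ι κ : Type*} [Fintype ι] {𝓤 : Ultrafilter X}
    {a : X → ι → ℝ} (ha : Tendsto a 𝓤 (𝓝 0)) (J : Finset κ) (hJ : J.Nonempty)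
    (W : κ → (ι → ℝ) → ℝ) (hW : ∀ k ∈ J, NC (W k)) :
    ∃ (π : (ι → ℝ) → (ι → ℝ)) (b : X → ι → ℝ), MM 𝓤 a π b ∧
      ∃ k₀ ∈ J, ∀ k ∈ J, Dv (fun x => W k₀ (π x)) (fun x => W k (π x)) := by
  induction hJ using Finset.Nonempty.cons_induction with
  | singleton k => exact ⟨_, _, MM.refl ha, k, by simp, by simp [Dv.refl]⟩
  | cons k' J hk' hJ ih =>
    obtain ⟨π, b, hπ, k₀, hk₀, hd⟩ := ih fun k hk => hW k (by simp [hk])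
    obtain ⟨π', b', hπ', hor⟩ := toric hπ.tend (hπ.comp_nc (hW k₀ (by simp [hk₀])))
      (hπ.comp_nc (hW k' (by simp)))
    refine ⟨_, b', hπ.comp hπ', ?_⟩
    rcases hor with h | h
    · refine ⟨k₀, by simp [hk₀], fun k hk => ?_⟩
      rcases Finset.mem_cons.1 hk with rfl | hk
      · exact h
      · exact (hd k hk).comp hπ'
    · refine ⟨k', by simp, fun k hk => ?_⟩
      rcases Finset.mem_cons.1 hk with rfl | hk
      · exact Dv.refl _
      · exact h.trans ((hd k hk).comp hπ')

/-- extract common roots -/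
theorem common_root {X ι κ : Type*} [Fintype ι] {𝓤 : Ultrafilter X}
    {a : X → ι → ℝ} (ha : Tendsto a 𝓤 (𝓝 0)) (J : Finset κ) (hJ : J.Nonempty)
    (c : κ → (ι → ℝ) → ℝ) (hc : ∀ k ∈ J, NC (c k)) (e : κ → ℕ) (he : ∀ k ∈ J, 0 < e k) :
    ∃ (π : (ι → ℝ) → (ι → ℝ)) (b : X → ι → ℝ) (w : (ι → ℝ) → ℝ) (q : κ → (ι → ℝ) → ℝ),
      MM 𝓤 a π b ∧ NC w ∧ (∀ k ∈ J, AnalyticAt ℝ (q k) 0 ∧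
        ∀ᶠ x in 𝓝 0, c k (π x) = w x ^ e k * q k x) ∧ ∃ k₀ ∈ J, q k₀ 0 ≠ 0 := by
  classical
  set D : ℕ := ∏ k ∈ J, e k with hDdef
  have hD : 0 < D := Finset.prod_pos he
  obtain ⟨s, b, hs, hb⟩ := ramify ha (fun _ => D) (fun _ => hD)
  have h1 : ∀ k ∈ J, ∃ (W : (ι → ℝ) → ℝ) (u : (ι → ℝ) → ℝ), NC W ∧ AnalyticAt ℝ u 0 ∧ u 0 ≠ 0 ∧
      ∀ᶠ x in 𝓝 0, c k (fun i => s i * x i ^ D) = W x ^ e k * u x := by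
    intro k hk
    obtain ⟨α, u, hu, hu0, hce⟩ := hc k hk
    refine ⟨fun x => ∏ i, x i ^ ((D / e k) * α i),
      fun x => (∏ i, s i ^ α i) * u (fun i => s i * x i ^ D), NC.mono _,
      analyticAt_const.mul (hb.comp_analytic hu), ?_, ?_⟩
    · refine mul_ne_zero (Finset.prod_ne_zero_iff.2 fun k _ => pow_ne_zero _ (hs k)) ?_
      have h0 : (fun i => s i * (0 : ι → ℝ) i ^ D) = 0 := hb.map0
      rw [h0]; exact hu0
    · filter_upwards [hb.tendsto.eventually hce] with x hx
      rw [hx, ramify_mono, ← Finset.prod_pow]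
      have : ∀ i, (x i ^ ((D / e k) * α i)) ^ e k = x i ^ (D * α i) := by
        intro i
        rw [← pow_mul]
        congr 1
        have hdvd : D / e k * e k = D := Nat.div_mul_cancel (Finset.dvd_prod_of_mem e hk)
        calc D / e k * α i * e k = (D / e k * e k) * α i := by ring
          _ = _ := by rw [hdvd]
      simp only [this]
      ring
  choose! W u hW hu hu0 hWu using h1
  obtain ⟨π, b', hπ, k₀, hk₀, hd⟩ := toric_min hb.tend J hJ W hW
  unfold Dv at hd
  choose! r hr hre using hd
  refine ⟨_, b', fun x => W k₀ (π x),
    fun k => if k = k₀ then fun x => u k (π x) else fun x => (r k x) ^ e k * u k (π x),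
    hb.comp hπ, hπ.comp_nc (hW k₀ hk₀), ?_, k₀, hk₀, ?_⟩
  · intro k hk
    have h2 := hπ.tendsto.eventually (hWu k hk)
    by_cases h : k = k₀
    · subst h
      simp only [if_true]
      exact ⟨hπ.comp_analytic (hu k hk), h2⟩
    · simp only [h, if_false]
      refine ⟨((hr k hk).analyticAt.pow _).mul (hπ.comp_analytic (hu k hk)), ?_⟩
      filter_upwards [h2, hre k hk] with x h3 h4
      rw [h3, h4, mul_pow]; ring
  · simp only [if_true]
    rw [hπ.map0]
    exact hu0 k₀ hk₀

end Loj

namespace Loj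

/-- combine a value for `none` with values on `ι` -/
def oc {ι : Type*} (t : ℝ) (y : ι → ℝ) : Option ι → ℝ := fun o => o.elim t y

/-- the `ι` part -/
def os {ι : Type*} (x : Option ι → ℝ) : ι → ℝ := fun i => x (some i)

@[simp] theorem oc_none {ι : Type*} (t : ℝ) (y : ι → ℝ) : oc t y none = t := rfl
@[simp] theorem oc_some {ι : Type*} (t : ℝ) (y : ι → ℝ) (i : ι) : oc t y (some i) = y i := rfl
@[simp] theorem os_oc {ι : Type*} (t : ℝ) (y : ι → ℝ) : os (oc t y) = y := rfl
@[simp] theorem os_apply {ι : Type*} (x : Option ι → ℝ) (i : ι) : os x i = x (some i) := rfl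
@[simp] theorem os_zero {ι : Type*} : os (0 : Option ι → ℝ) = 0 := rfl
theorem oc_os {ι : Type*} (x : Option ι → ℝ) : oc (x none) (os x) = x := by
  funext o; cases o <;> rfl
@[simp] theorem oc_zero {ι : Type*} : oc 0 (0 : ι → ℝ) = 0 := by
  funext o; cases o <;> rfl

/-- unit direction -/
def e0 {ι : Type*} : Option ι → ℝ := oc 1 0

theorem oc_add_smul {ι : Type*} (t s : ℝ) (y : ι → ℝ) : oc t y + s • e0 = oc (t + s) y := by
  funext o; cases o <;> simp [e0]

theorem add_smul_none {ι : Type*} (x : Option ι → ℝ) (s : ℝ) : (x + s • (e0 : Option ι → ℝ)) none = x none + s := by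
  simp [e0]

theorem os_add_smul {ι : Type*} (x : Option ι → ℝ) (s : ℝ) : os (x + s • e0) = os x := by
  funext i; simp [e0]

theorem analyticAt_os {ι : Type*} [Fintype ι] (x : Option ι → ℝ) :
    AnalyticAt ℝ (os : (Option ι → ℝ) → (ι → ℝ)) x :=
  analyticAt_pi_iff.2 fun i => analyticAt_coord (some i) x

theorem tendsto_os {ι : Type*} [Fintype ι] :
    Tendsto (os : (Option ι → ℝ) → (ι → ℝ)) (𝓝 0) (𝓝 0) := by
  simpa using (analyticAt_os (ι := ι) 0).continuousAt.tendsto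

theorem AnalyticAt_oc {E ι : Type*} [NormedAddCommGroup E] [NormedSpace ℝ E] [Fintype ι]
    {f : E → ℝ} {h : E → ι → ℝ} {x : E}
    (hf : AnalyticAt ℝ f x) (hh : AnalyticAt ℝ h x) : AnalyticAt ℝ (fun x => oc (f x) (h x)) x := by
  refine analyticAt_pi_iff.2 fun o => ?_
  cases o with
  | none => exact hf
  | some i => exact analyticAt_pi_iff.1 hh i

/-- derivative in the `none` direction -/
noncomputable def Dz {ι : Type*} (g : (Option ι → ℝ) → ℝ) (p : Option ι → ℝ) : ℝ :=
  deriv (fun t : ℝ => g (p + t • e0)) 0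

theorem hasDerivAt_line {ι : Type*} [Fintype ι] {g : (Option ι → ℝ) → ℝ} {p : Option ι → ℝ}
    (hg : DifferentiableAt ℝ g p) : HasDerivAt (fun t : ℝ => g (p + t • e0)) (fderiv ℝ g p e0) 0 := by
  have h1 : HasDerivAt (fun t : ℝ => p + t • (e0 : Option ι → ℝ)) e0 0 := by
    simpa using ((hasDerivAt_id (0 : ℝ)).smul_const (e0 : Option ι → ℝ)).const_add p
  have h2 : HasFDerivAt g (fderiv ℝ g p) (p + (0 : ℝ) • e0) := by simpa using hg.hasFDerivAt
  exact h2.comp_hasDerivAt 0 h1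

theorem Dz_eq {ι : Type*} [Fintype ι] {g : (Option ι → ℝ) → ℝ} {p : Option ι → ℝ}
    (hg : DifferentiableAt ℝ g p) : Dz g p = fderiv ℝ g p e0 := (hasDerivAt_line hg).deriv

theorem Dz_analytic {ι : Type*} [Fintype ι] {g : (Option ι → ℝ) → ℝ} {p : Option ι → ℝ}
    (hg : AnalyticAt ℝ g p) : AnalyticAt ℝ (Dz g) p := by
  have h1 : AnalyticAt ℝ (fun x => fderiv ℝ g x e0) p :=
    ((ContinuousLinearMap.apply ℝ ℝ (e0 : Option ι → ℝ)).analyticAt _).comp hg.fderiv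
  refine h1.congr ?_
  filter_upwards [hg.eventually_analyticAt] with x hx
  exact (Dz_eq hx.differentiableAt).symm

theorem Dz_iter_analytic {ι : Type*} [Fintype ι] {g : (Option ι → ℝ) → ℝ} {p : Option ι → ℝ}
    (hg : AnalyticAt ℝ g p) (k : ℕ) : AnalyticAt ℝ (Dz^[k] g) p := by
  induction k with
  | zero => exact hg
  | succ k ih => rw [Function.iterate_succ_apply']; exact Dz_analytic ih

theorem Dz_congr {ι : Type*} [Fintype ι] {f g : (Option ι → ℝ) → ℝ} {p : Option ι → ℝ}
    (h : f =ᶠ[𝓝 p] g) : Dz f =ᶠ[𝓝 p] Dz g := by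
  filter_upwards [h.eventually_nhds] with x hx
  have hc : Tendsto (fun t : ℝ => x + t • (e0 : Option ι → ℝ)) (𝓝 0) (𝓝 x) := by
    have : Continuous (fun t : ℝ => x + t • (e0 : Option ι → ℝ)) := by fun_prop
    simpa using this.tendsto 0
  exact Filter.EventuallyEq.deriv_eq (hc.eventually hx)

theorem Dz_iter_congr {ι : Type*} [Fintype ι] {f g : (Option ι → ℝ) → ℝ} {p : Option ι → ℝ}
    (h : f =ᶠ[𝓝 p] g) (k : ℕ) : Dz^[k] f =ᶠ[𝓝 p] Dz^[k] g := by
  induction k with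
  | zero => exact h
  | succ k ih => rw [Function.iterate_succ_apply', Function.iterate_succ_apply']; exact Dz_congr ih

/-- product rule with the coordinate -/
theorem Dz_mul {ι : Type*} [Fintype ι] {h : (Option ι → ℝ) → ℝ} {p : Option ι → ℝ} (c : (ι → ℝ) → ℝ)
    {f : (Option ι → ℝ) → ℝ}
    (hh : DifferentiableAt ℝ h p) (hf : DifferentiableAt ℝ f p) (k : ℝ) :
    Dz (fun x => c (os x) + x none * h x + k * f x) p = p none * Dz h p + h p + k * Dz f p := by
  unfold Dz
  have h1 := (hasDerivAt_line hh)
  have h3 := (hasDerivAt_line hf)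
  have h2 : HasDerivAt (fun t : ℝ => (p + t • (e0 : Option ι → ℝ)) none) 1 0 := by
    simp only [add_smul_none]
    exact (hasDerivAt_id (0 : ℝ)).const_add _
  have h4 := ((h2.mul h1).const_add (c (os p))).add (h3.const_mul k)
  rw [h1.deriv, h3.deriv]
  simp only [os_add_smul]
  refine HasDerivAt.deriv (HasDerivAt.congr_deriv (f' := _) h4 ?_)
  simp only [zero_smul, add_zero]; ring

theorem Dz_iter_mul {ι : Type*} [Fintype ι] {h : (Option ι → ℝ) → ℝ} (c : (ι → ℝ) → ℝ)
    (hh : AnalyticAt ℝ h 0) (k : ℕ) :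
    Dz^[k+1] (fun x => c (os x) + x none * h x) =ᶠ[𝓝 0]
      fun x => x none * Dz^[k+1] h x + (k + 1) * Dz^[k] h x := by
  induction k with
  | zero =>
    filter_upwards [hh.eventually_analyticAt] with x hx
    have := Dz_mul (f := fun _ => 0) c hx.differentiableAt (by fun_prop) 0
    simpa using this
  | succ k ih =>
    rw [Function.iterate_succ_apply']
    refine (Dz_congr ih).trans ?_
    filter_upwards [(Dz_iter_analytic hh (k+1)).eventually_analyticAt,
      (Dz_iter_analytic hh k).eventually_analyticAt] with x hx hx'
    have := Dz_mul (fun _ => 0) hx.differentiableAt hx'.differentiableAt (k+1)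
    simp only [zero_add] at this
    rw [this]
    simp only [Function.iterate_succ_apply']
    push_cast; ring

/-- Taylor expansion in the `none` variable. -/
theorem taylor {ι : Type*} [Fintype ι] (d : ℕ) : ∀ (g : (Option ι → ℝ) → ℝ), AnalyticAt ℝ g 0 →
    ∃ (c : ℕ → (ι → ℝ) → ℝ) (u : (Option ι → ℝ) → ℝ), (∀ j, AnalyticAt ℝ (c j) 0) ∧
      AnalyticAt ℝ u 0 ∧
      (∀ᶠ x in 𝓝 0, g x = ∑ j ∈ Finset.range d, c j (os x) * x none ^ j + x none ^ d * u x) ∧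
      (∀ᶠ y in 𝓝 0, ∀ j < d, Dz^[j] g (oc 0 y) = (j.factorial : ℝ) * c j y) ∧
      Dz^[d] g 0 = (d.factorial : ℝ) * u 0 := by
  classical
  have hoc : Tendsto (fun y : ι → ℝ => oc 0 y) (𝓝 0) (𝓝 0) := by
    have := (AnalyticAt_oc (ι := ι) (x := (0 : ι → ℝ)) (f := fun _ => 0) (h := fun y => y)
      analyticAt_const analyticAt_id).continuousAt.tendsto
    simpa using this
  induction d with
  | zero =>
    intro g hg
    exact ⟨fun _ _ => 0, g, fun _ => analyticAt_const, hg, by simp, by simp, by simp⟩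
  | succ d ih =>
    intro g hg
    obtain ⟨h, hh, he⟩ := coord_division hg none
    obtain ⟨c, u, hc, hu, he', hd, hd'⟩ := ih h hh
    have hup : ∀ x : Option ι → ℝ, Function.update x none 0 = oc 0 (os x) := by
      intro x; funext o; cases o <;> simp
    have hgc : AnalyticAt ℝ (fun y => g (oc 0 y)) 0 := by
      refine AnalyticAt.comp (g := g) ?_ (AnalyticAt_oc analyticAt_const analyticAt_id)
      simpa using hg
    have hgg : g =ᶠ[𝓝 0] fun x => (fun y => g (oc 0 y)) (os x) + x none * h x := by
      filter_upwards [he] with x hx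
      rw [hx, hup]
    have hD : ∀ j, Dz^[j+1] g =ᶠ[𝓝 0] fun x => x none * Dz^[j+1] h x + (j + 1) * Dz^[j] h x :=
      fun j => (Dz_iter_congr hgg _).trans (Dz_iter_mul (fun y => g (oc 0 y)) hh j)
    refine ⟨fun j => Nat.casesOn j (fun y => g (oc 0 y)) c, u, ?_, hu, ?_, ?_, ?_⟩
    · intro j
      cases j with
      | zero => exact hgc
      | succ j => exact hc j
    · filter_upwards [hgg, he'] with x h1 h2
      rw [h1, Finset.sum_range_succ', h2, mul_add, Finset.mul_sum]
      have : ∀ j, c j (os x) * x none ^ (j + 1) = x none * (c j (os x) * x none ^ j) := by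
        intro j; ring
      simp only [this]
      have h3 : (Nat.rec (motive := fun _ => (ι → ℝ) → ℝ) (fun y => g (oc 0 y))
        (fun n _ => c n) 0 : (ι → ℝ) → ℝ) (os x) = g (oc 0 (os x)) := rfl
      rw [h3]
      ring
    · have hall : ∀ᶠ y in 𝓝 (0 : ι → ℝ), ∀ j ∈ Finset.range d, Dz^[j+1] g (oc 0 y) =
          (j + 1) * Dz^[j] h (oc 0 y) := by
        rw [Filter.eventually_all_finset]
        intro j _
        filter_upwards [hoc.eventually (hD j)] with y hy
        rw [hy]; simp
      filter_upwards [hall, hd] with y h1 h2 j hj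
      cases j with
      | zero => simp
      | succ j =>
        rw [h1 j (by simpa using hj), h2 j (by omega), Nat.factorial_succ]
        push_cast; ring
    · rw [(hD d).self_of_nhds]
      show _ + (d + 1 : ℝ) * Dz^[d] h 0 = _
      rw [hd', Nat.factorial_succ]
      simp; ring

end Loj

namespace Loj

/-- shear maps -/
def shear {ι : Type*} (φ : (ι → ℝ) → ℝ) (x : Option ι → ℝ) : Option ι → ℝ :=
  oc (x none + φ (os x)) (os x)

theorem Dz_shear {ι : Type*} (φ : (ι → ℝ) → ℝ) (g : (Option ι → ℝ) → ℝ) (k : ℕ) :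
    Dz^[k] (fun x => g (shear φ x)) = fun x => Dz^[k] g (shear φ x) := by
  induction k with
  | zero => rfl
  | succ k ih =>
    rw [Function.iterate_succ_apply', Function.iterate_succ_apply', ih]
    funext x
    show deriv _ 0 = deriv _ 0
    congr 1
    funext t
    show Dz^[k] g _ = Dz^[k] g _
    refine congrArg _ ?_
    funext o
    cases o with
    | none =>
      simp only [shear, os_add_smul]
      simp only [oc_none, Pi.add_apply, Pi.smul_apply, e0, smul_eq_mul]
      ring
    | some i => simp [shear, e0]

theorem shear_analytic {ι : Type*} [Fintype ι] {φ : (ι → ℝ) → ℝ} (hφ : AnalyticAt ℝ φ 0) :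
    AnalyticAt ℝ (shear φ) 0 := by
  refine AnalyticAt_oc ((analyticAt_coord _ _).add ?_) (analyticAt_os 0)
  exact AnalyticAt.comp (g := φ) (by simpa using hφ) (analyticAt_os 0)

theorem exists_shear {ι : Type*} [Fintype ι] {G : (Option ι → ℝ) → ℝ} (hG : AnalyticAt ℝ G 0)
    (h0 : G 0 = 0) (h1 : Dz G 0 ≠ 0) : ∃ φ : (ι → ℝ) → ℝ, AnalyticAt ℝ φ 0 ∧ φ 0 = 0 ∧
      ∀ᶠ y in 𝓝 0, G (oc (φ y) y) = 0 := by
  let F : (ι → ℝ) × ℝ → ℝ := fun p => G (oc p.2 p.1)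
  have hF : AnalyticAt ℝ F (0, 0) := by
    refine AnalyticAt.comp (g := G) ?_ (AnalyticAt_oc analyticAt_snd analyticAt_fst)
    simpa using hG
  have hcd : ContDiffAt ℝ ω F (0, 0) := hF.contDiffAt
  have hF0 : F (0, 0) = 0 := by simp [F, h0]
  have hd : fderiv ℝ F (0, 0) (0, 1) = Dz G 0 := by
    have h2 : HasDerivAt (fun t : ℝ => ((0, 0) : (ι → ℝ) × ℝ) + t • ((0, 1) : (ι → ℝ) × ℝ))
        (0, 1) 0 := by
      simpa using ((hasDerivAt_id (0 : ℝ)).smul_const ((0, 1) : (ι → ℝ) × ℝ)).const_add (0, 0)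
    have h3 : HasFDerivAt F (fderiv ℝ F (0, 0))
        (((0, 0) : (ι → ℝ) × ℝ) + (0 : ℝ) • ((0, 1) : (ι → ℝ) × ℝ)) := by
      simpa using hF.differentiableAt.hasFDerivAt
    have h4 := (h3.comp_hasDerivAt 0 h2).deriv
    rw [← h4]
    unfold Dz
    congr 1
    funext t
    show G _ = G _
    congr 1
    funext o
    cases o <;> simp [e0]
  have hinv : (fderiv ℝ F (0, 0) ∘L .inr ℝ (ι → ℝ) ℝ).IsInvertible := by
    refine ⟨ContinuousLinearEquiv.unitsEquivAut ℝ (Units.mk0 (Dz G 0) h1), ?_⟩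
    ext
    simp [hd]
  refine ⟨hcd.implicitFunction (by simp) hinv,
    (hcd.contDiffAt_implicitFunction (by simp) hinv).analyticAt,
    hcd.implicitFunction_apply_self (by simp) hinv, ?_⟩
  have := hcd.eventually_apply_implicitFunction (by simp) hinv
  filter_upwards [this] with y hy
  rw [hF0] at hy
  exact hy

/-- regular of order d -/
def Ord {ι : Type*} (d : ℕ) (g : (Option ι → ℝ) → ℝ) : Prop :=
  (∀ k < d, Dz^[k] g 0 = 0) ∧ Dz^[d] g 0 ≠ 0

theorem exists_ord {ι : Type*} {g : (Option ι → ℝ) → ℝ} {d : ℕ} (h : ¬ ∀ k < d, Dz^[k] g 0 = 0) :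
    ∃ e < d, Ord e g := by
  classical
  push Not at h
  have hex : ∃ k, Dz^[k] g 0 ≠ 0 := ⟨h.choose, h.choose_spec.2⟩
  refine ⟨Nat.find hex, lt_of_le_of_lt (Nat.find_min' hex h.choose_spec.2) h.choose_spec.1, ?_,
    Nat.find_spec hex⟩
  intro k hk
  simpa using Nat.find_min hex hk

/-- Tschirnhaus form -/
theorem tschirnhaus {ι : Type*} [Fintype ι] {d : ℕ} {g : (Option ι → ℝ) → ℝ}
    (hg : AnalyticAt ℝ g 0) (ho : Ord (d + 1) g) :
    ∃ (φ : (ι → ℝ) → ℝ) (c : ℕ → (ι → ℝ) → ℝ) (u : (Option ι → ℝ) → ℝ),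
      AnalyticAt ℝ φ 0 ∧ φ 0 = 0 ∧ (∀ j, AnalyticAt ℝ (c j) 0) ∧ (∀ j < d, c j 0 = 0) ∧
      AnalyticAt ℝ u 0 ∧ u 0 ≠ 0 ∧
      (∀ᶠ x in 𝓝 0, g (shear φ x) =
        ∑ j ∈ Finset.range d, c j (os x) * x none ^ j + x none ^ (d + 1) * u x) := by
  obtain ⟨φ, hφ, hφ0, he⟩ := exists_shear (Dz_iter_analytic hg d) (ho.1 d (by omega))
    (by have := ho.2; rwa [Function.iterate_succ_apply'] at this)
  have hs0 : shear φ 0 = 0 := by simp [shear, hφ0]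
  have hgs : AnalyticAt ℝ (fun x => g (shear φ x)) 0 :=
    AnalyticAt.comp (g := g) (by rw [hs0]; exact hg) (shear_analytic hφ)
  obtain ⟨c, u, hc, hu, h1, h2, h3⟩ := taylor (d + 1) _ hgs
  simp only [Dz_shear] at h2 h3
  refine ⟨φ, c, u, hφ, hφ0, hc, ?_, hu, ?_, ?_⟩
  · intro j hj
    have := h2.self_of_nhds j (by omega)
    rw [oc_zero, hs0, ho.1 j (by omega)] at this
    have hf : (j.factorial : ℝ) ≠ 0 := by exact_mod_cast j.factorial_ne_zero
    simpa [hf] using this.symm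
  · intro h
    rw [hs0, h, mul_zero] at h3
    exact ho.2 h3
  · have h4 : ∀ᶠ y in 𝓝 0, c d y = 0 := by
      filter_upwards [he, h2] with y h5 h6
      have := h6 d (by omega)
      have hs : shear φ (oc 0 y) = oc (φ y) y := by simp [shear]
      rw [hs, h5] at this
      have hf : (d.factorial : ℝ) ≠ 0 := by exact_mod_cast d.factorial_ne_zero
      simpa [hf] using this.symm
    filter_upwards [h1, tendsto_os.eventually h4] with x h5 h6
    rw [h5, Finset.sum_range_succ, h6]
    simp

theorem poly_dvd (d : ℕ) : ∀ (P : Polynomial ℝ) (v : ℝ → ℝ), ContinuousAt v 0 →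
    (∀ᶠ t in 𝓝[≠] 0, P.eval t = t ^ d * v t) → Polynomial.X ^ d ∣ P := by
  induction d with
  | zero => intro P v _ _; simp
  | succ d ih =>
    intro P v hv h
    have h0 : P.eval 0 = 0 := by
      have h1 : Tendsto (fun t => P.eval t) (𝓝[≠] 0) (𝓝 (P.eval 0)) :=
        (P.continuous.tendsto 0).mono_left nhdsWithin_le_nhds
      have h2 : Tendsto (fun t : ℝ => t ^ (d + 1) * v t) (𝓝[≠] 0) (𝓝 (0 ^ (d + 1) * v 0)) :=
        (((continuous_pow (d + 1)).tendsto 0).mul hv.tendsto).mono_left nhdsWithin_le_nhds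
      have := tendsto_nhds_unique (h1.congr' h) h2
      simpa using this
    have hX : Polynomial.X ∣ P := by
      rw [Polynomial.X_dvd_iff, Polynomial.coeff_zero_eq_eval_zero, h0]
    obtain ⟨Q, rfl⟩ := hX
    rw [pow_succ']
    refine mul_dvd_mul_left _ (ih Q v hv ?_)
    filter_upwards [h, self_mem_nhdsWithin] with t ht ht0
    have ht0 : t ≠ 0 := ht0
    simp only [Polynomial.eval_mul, Polynomial.eval_X] at ht
    apply mul_left_cancel₀ ht0
    rw [ht]; ring

/-- key drop of order -/
theorem ord_drop_poly (d : ℕ) (a : ℕ → ℝ) (J : Finset ℕ) (hJ : ∀ j ∈ J, j < d) (u z : ℝ) (hu : u ≠ 0)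
    (v : ℝ → ℝ) (hv : ContinuousAt v 0) (k₀ : ℕ) (hk₀ : k₀ ∈ J) (ha : a k₀ ≠ 0)
    (h : ∀ᶠ t in 𝓝[≠] (0 : ℝ), ∑ j ∈ J, a j * (z + t) ^ j + (z + t) ^ (d + 1) * u
      = t ^ (d + 1) * v t) : False := by
  let Q : Polynomial ℝ := ∑ j ∈ J, Polynomial.C (a j) * Polynomial.X ^ j +
      Polynomial.X ^ (d + 1) * Polynomial.C u
  let P : Polynomial ℝ := Q.comp (Polynomial.C z + Polynomial.X)
  have hP : Polynomial.X ^ (d + 1) ∣ P := by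
    refine poly_dvd _ _ v hv ?_
    filter_upwards [h] with t ht
    rw [← ht]
    simp [P, Q, Polynomial.eval_finsetSum, mul_comm u]
  obtain ⟨R, hR⟩ := hP
  have hQ : Q = (Polynomial.X - Polynomial.C z) ^ (d + 1) *
      R.comp (Polynomial.X - Polynomial.C z) := by
    have : Q = P.comp (Polynomial.X - Polynomial.C z) := by
      simp [P, Polynomial.comp_assoc]
    rw [this, hR]; simp
  have hcoeff : ∀ k, Q.coeff k = (if k ∈ J then a k else 0) + if k = d + 1 then u else 0 := by
    intro k
    simp only [Q, Polynomial.coeff_add, Polynomial.finsetSum_coeff, Polynomial.coeff_C_mul,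
      Polynomial.coeff_X_pow, Polynomial.coeff_mul_C]
    simp
  have hdeg : Q.natDegree = d + 1 := by
    apply le_antisymm
    · rw [Polynomial.natDegree_le_iff_coeff_eq_zero]
      intro N hN
      rw [hcoeff, if_neg (fun hm => by have := hJ N hm; omega), if_neg (by omega)]; simp
    · apply Polynomial.le_natDegree_of_ne_zero
      rw [hcoeff, if_neg (fun hm => by have := hJ _ hm; omega), if_pos rfl]; simpa
  have hQ0 : Q ≠ 0 := by
    intro h0; rw [h0] at hdeg; simp at hdeg
  set S := R.comp (Polynomial.X - Polynomial.C z) with hS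
  have hS0 : S ≠ 0 := by rintro h0; rw [h0, mul_zero] at hQ; exact hQ0 hQ
  have hSd : S.natDegree = 0 := by
    have hm : ((Polynomial.X - Polynomial.C z) ^ (d + 1)).Monic := (Polynomial.monic_X_sub_C z).pow _
    have h1 := congrArg Polynomial.natDegree hQ
    rw [hm.natDegree_mul' hS0, hdeg, (Polynomial.monic_X_sub_C z).natDegree_pow,
      Polynomial.natDegree_X_sub_C] at h1
    omega
  obtain ⟨s, hs⟩ : ∃ s, S = Polynomial.C s := ⟨_, Polynomial.eq_C_of_natDegree_eq_zero hSd⟩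
  have hs0 : s ≠ 0 := by rintro rfl; simp at hs; exact hS0 hs
  rw [hs] at hQ
  have hc : ∀ k, Q.coeff k = (-z) ^ (d + 1 - k) * ((d + 1).choose k : ℝ) * s := by
    intro k
    rw [hQ, Polynomial.coeff_mul_C, sub_eq_add_neg, ← Polynomial.C_neg,
      Polynomial.coeff_X_add_C_pow]
  have hz : z = 0 := by
    have h1 := hc d
    rw [hcoeff, if_neg (fun hm => by have := hJ _ hm; omega), if_neg (by omega)] at h1
    simp [hs0] at h1
    rcases h1 with h1 | h1
    · exact h1
    · exfalso
      have : (0:ℝ) < d + 1 := by positivity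
      linarith
  have h2 := hc k₀
  have h3 := hJ k₀ hk₀
  rw [hcoeff, if_pos hk₀, if_neg (by omega), hz, neg_zero, zero_pow (by omega)] at h2
  simp at h2
  exact ha h2

end Loj

namespace Loj

/-- local uniformization along an ultrafilter -/
def LU {X : Type*} (𝓤 : Ultrafilter X) (ι : Type*) [Fintype ι] : Prop :=
  ∀ a : X → ι → ℝ, Tendsto a 𝓤 (𝓝 0) → ∀ f : (ι → ℝ) → ℝ, AnalyticAt ℝ f 0 →
    (¬ ∀ᶠ x in 𝓝 0, f x = 0) →
    ∃ (π : (ι → ℝ) → (ι → ℝ)) (b : X → ι → ℝ), Up 𝓤 a π b ∧ NC (fun x => f (π x))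

theorem LU.fam {X ι κ : Type*} {𝓤 : Ultrafilter X} [Fintype ι] (h : LU 𝓤 ι) {a : X → ι → ℝ}
    (ha : Tendsto a 𝓤 (𝓝 0)) (J : Finset κ) (c : κ → (ι → ℝ) → ℝ)
    (hc : ∀ k ∈ J, AnalyticAt ℝ (c k) 0) (hc0 : ∀ k ∈ J, ¬ ∀ᶠ x in 𝓝 0, c k x = 0) :
    ∃ (π : (ι → ℝ) → (ι → ℝ)) (b : X → ι → ℝ), MM 𝓤 a π b ∧ ∀ k ∈ J, NC (fun x => c k (π x)) := by
  have h1 : AnalyticAt ℝ (fun x => ∏ k ∈ J, c k x) 0 := Finset.analyticAt_fun_prod _ hc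
  have h2 : AnalyticAt ℝ (fun x : ι → ℝ => ∏ i, x i) 0 :=
    Finset.analyticAt_fun_prod _ fun i _ => analyticAt_coord i 0
  obtain ⟨π, b, hπ, hn⟩ := h a ha (fun x => (∏ k ∈ J, c k x) * ∏ i, x i) (h1.mul h2) (by
    intro h0
    rcases eventually_zero_or h1 h2 h0 with h0 | h0
    · exact prod_not_zero J hc hc0 h0
    · exact prod_not_zero Finset.univ (f := fun i (x : ι → ℝ) => x i)
        (fun i _ => analyticAt_coord i 0) (fun i _ => coord_not_zero i) h0)
  obtain ⟨h3, h4⟩ := NC.factor (f := fun x => ∏ k ∈ J, c k (π x)) (g := fun x => ∏ i, π x i)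
    (hπ.comp_analytic h1) (hπ.comp_analytic h2) hn
  refine ⟨π, b, ⟨hπ, fun i => ?_⟩, ?_⟩
  · exact NC.factor_prod Finset.univ (f := fun i x => π x i)
      (fun i _ => hπ.comp_analytic (analyticAt_coord i 0)) h4 i (Finset.mem_univ _)
  · exact NC.factor_prod J (f := fun k x => c k (π x)) (fun k hk => hπ.comp_analytic (hc k hk)) h3

theorem MM.lift {X ι : Type*} {𝓤 : Ultrafilter X} [Fintype ι] {a : X → Option ι → ℝ}
    (ha : Tendsto a 𝓤 (𝓝 0)) {π : (ι → ℝ) → (ι → ℝ)} {b : X → ι → ℝ}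
    (h : MM 𝓤 (fun t => os (a t)) π b) :
    MM 𝓤 a (fun x => oc (x none) (π (os x))) (fun t => oc (a t none) (b t)) where
  an := AnalyticAt_oc (analyticAt_coord _ _)
    (AnalyticAt.comp (g := π) (by simpa using h.an) (analyticAt_os 0))
  map0 := by simp [h.map0]
  tend := by
    refine tendsto_pi_nhds.2 fun o => ?_
    cases o with
    | none => exact tendsto_pi_nhds.1 ha none
    | some i => exact tendsto_pi_nhds.1 h.tend i
  eq := by
    filter_upwards [h.eq] with t ht
    simp [ht, oc_os]
  nc := by
    intro o
    cases o with
    | none => exact NC.coord none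
    | some i => exact NC.comp (h.nc i) (analyticAt_os 0) os_zero fun i => NC.coord (some i)

/-- the induction hypothesis/conclusion -/
def Good {X ι : Type*} (𝓤 : Ultrafilter X) [Fintype ι] (a : X → Option ι → ℝ)
    (g : (Option ι → ℝ) → ℝ) : Prop :=
  ∃ (π : (Option ι → ℝ) → (Option ι → ℝ)) (b : X → Option ι → ℝ), Up 𝓤 a π b ∧
    NC (fun x => g (π x)) ∧ ∀ i, NC (fun x => π x (some i))

theorem NC.comp_os {ι : Type*} [Fintype ι] {f : (ι → ℝ) → ℝ} (hf : NC f)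
    {π : (Option ι → ℝ) → (Option ι → ℝ)} (h : AnalyticAt ℝ π 0) (h0 : π 0 = 0)
    (hn : ∀ i, NC (fun x => π x (some i))) : NC (fun x => f (os (π x))) := by
  refine NC.comp (π := fun x => os (π x)) hf ?_ (by simp [h0]) hn
  exact AnalyticAt.comp (g := os) (analyticAt_os _) h

theorem Good.of_up {X ι : Type*} {𝓤 : Ultrafilter X} [Fintype ι] {a a' : X → Option ι → ℝ}
    {g : (Option ι → ℝ) → ℝ} {σ : (Option ι → ℝ) → (Option ι → ℝ)} (h : Up 𝓤 a σ a')
    (hn : ∀ i, ∃ f : (ι → ℝ) → ℝ, NC f ∧ ∀ x, σ x (some i) = f (os x))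
    (hg : Good 𝓤 a' (fun x => g (σ x))) : Good 𝓤 a g := by
  obtain ⟨π, b, hπ, h1, h2⟩ := hg
  refine ⟨_, b, h.comp hπ, h1, fun i => ?_⟩
  obtain ⟨f, hf, he⟩ := hn i
  simp only [he]
  exact hf.comp_os hπ.an hπ.map0 h2

/-- second core step -/
theorem core2 {X ι : Type*} {𝓤 : Ultrafilter X} [Fintype ι] {d : ℕ}
    (ih : ∀ e < d + 1, ∀ a : X → Option ι → ℝ, Tendsto a 𝓤 (𝓝 0) → ∀ g : (Option ι → ℝ) → ℝ,
      AnalyticAt ℝ g 0 → Ord e g → Good 𝓤 a g)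
    {a : X → Option ι → ℝ} (ha : Tendsto a 𝓤 (𝓝 0)) {g : (Option ι → ℝ) → ℝ}
    (J : Finset ℕ) (hJ : ∀ j ∈ J, j < d) {w : (ι → ℝ) → ℝ} (hw : NC w) (hw0 : w 0 = 0)
    {q : ℕ → (ι → ℝ) → ℝ} (hq : ∀ j ∈ J, AnalyticAt ℝ (q j) 0) {k₀ : ℕ} (hk₀ : k₀ ∈ J)
    (hqk : q k₀ 0 ≠ 0) {u : (Option ι → ℝ) → ℝ} (hu : AnalyticAt ℝ u 0) (hu0 : u 0 ≠ 0)
    (he : ∀ᶠ x in 𝓝 0, g x = ∑ j ∈ J, w (os x) ^ (d + 1 - j) * q j (os x) * x none ^ j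
      + x none ^ (d + 1) * u x) : Good 𝓤 a g := by
  have haz : Tendsto (fun t => a t none) 𝓤 (𝓝 0) := tendsto_pi_nhds.1 ha none
  by_cases hA : ∃ M : ℝ, ∀ᶠ t in (𝓤 : Filter X), |a t none| ≤ M * |w (os (a t))|
  · obtain ⟨M, hM⟩ := hA
    obtain ⟨z0, hz0⟩ : ∃ c, Tendsto (fun t => a t none / w (os (a t))) 𝓤 (𝓝 c) := by
      refine ultra_limit (M := |M|) ?_
      filter_upwards [hM] with t ht
      by_cases h : w (os (a t)) = 0
      · simp [h]
      · rw [abs_div, div_le_iff₀ (abs_pos.2 h)]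
        exact ht.trans (mul_le_mul_of_nonneg_right (le_abs_self M) (abs_nonneg _))
    set B : (Option ι → ℝ) → (Option ι → ℝ) :=
      fun x => oc (w (os x) * (z0 + x none)) (os x) with hB
    have hwos : AnalyticAt ℝ (fun x : Option ι → ℝ => w (os x)) 0 :=
      AnalyticAt.comp (g := w) (by simpa using hw.analyticAt) (analyticAt_os 0)
    have hz : AnalyticAt ℝ (fun x : Option ι → ℝ => z0 + x none) 0 :=
      analyticAt_const.add (analyticAt_coord _ _)
    have hBup : Up 𝓤 a B (fun t => oc (a t none / w (os (a t)) - z0) (os (a t))) := by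
      refine ⟨?_, ?_, ?_, ?_⟩
      · exact AnalyticAt_oc (hwos.mul hz) (analyticAt_os 0)
      · simp [hB, hw0]
      · refine tendsto_pi_nhds.2 fun o => ?_
        cases o with
        | none => simpa using hz0.sub_const z0
        | some i => exact tendsto_pi_nhds.1 ha (some i)
      · filter_upwards [hM] with t ht
        have : w (os (a t)) * (a t none / w (os (a t))) = a t none := by
          by_cases h : w (os (a t)) = 0
          · rw [h] at ht ⊢
            simp at ht
            simp [ht]
          · field_simp
        simp [hB, this, oc_os]
    set G : (Option ι → ℝ) → ℝ := fun x => ∑ j ∈ J, q j (os x) * (z0 + x none) ^ j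
      + (z0 + x none) ^ (d + 1) * u (B x) with hG
    have hGa : AnalyticAt ℝ G 0 := by
      refine (Finset.analyticAt_fun_sum _ fun j hj => ?_).add
        ((hz.pow _).mul (hBup.comp_analytic hu))
      exact (AnalyticAt.comp (g := q j) (by simpa using hq j hj) (analyticAt_os 0)).mul (hz.pow _)
    have hGo : ¬ ∀ k < d + 1, Dz^[k] G 0 = 0 := by
      intro h0
      obtain ⟨c, v, hc, hv, h1, h2, -⟩ := taylor (d + 1) G hGa
      have hcz : ∀ j < d + 1, c j 0 = 0 := by
        intro j hj
        have := h2.self_of_nhds j hj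
        rw [oc_zero, h0 j hj] at this
        have hf : (j.factorial : ℝ) ≠ 0 := by exact_mod_cast j.factorial_ne_zero
        simpa [hf] using this.symm
      have hl : AnalyticAt ℝ (fun t : ℝ => oc t (0 : ι → ℝ)) 0 :=
        AnalyticAt_oc analyticAt_id analyticAt_const
      have hl' : Tendsto (fun t : ℝ => oc t (0 : ι → ℝ)) (𝓝 0) (𝓝 0) := by
        simpa using hl.continuousAt.tendsto
      refine ord_drop_poly d (fun j => q j 0) J hJ (u 0) z0 hu0 (fun t => v (oc t 0)) ?_ k₀ hk₀ hqk ?_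
      · exact (AnalyticAt.comp (g := v) (by simpa using hv) hl).continuousAt
      · refine Filter.Eventually.filter_mono nhdsWithin_le_nhds ?_
        filter_upwards [hl'.eventually h1] with t ht
        have hs : ∑ j ∈ Finset.range (d + 1), c j (os (oc t (0 : ι → ℝ))) * (oc t (0 : ι → ℝ)) none ^ j
            = 0 := Finset.sum_eq_zero fun j hj => by
          rw [os_oc, hcz j (by simpa using hj), zero_mul]
        rw [hs, zero_add] at ht
        simpa [hG, hB, hw0] using ht
    obtain ⟨e, hed, hoe⟩ := exists_ord hGo
    obtain ⟨π, b, hπ, h1, h2⟩ := ih e hed _ hBup.tend G hGa hoe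
    refine ⟨_, b, hBup.comp hπ, ?_, h2⟩
    refine (((hw.comp_os hπ.an hπ.map0 h2).pow (d + 1)).mul h1).congr ?_
    filter_upwards [hπ.tendsto.eventually (hBup.tendsto.eventually he)] with x hx
    rw [hx]
    simp only [hB, hG, os_oc, oc_none]
    rw [mul_add (w (os (π x)) ^ (d + 1)), Finset.mul_sum]
    congr 1
    · refine Finset.sum_congr rfl fun j hj => ?_
      have := hJ j hj
      have h3 : w (os (π x)) ^ (d + 1) = w (os (π x)) ^ (d + 1 - j) * w (os (π x)) ^ j := by
        rw [← pow_add]; congr 1; omega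
      rw [h3, mul_pow]; ring
    · rw [mul_pow]; ring
  · have hBb : ∀ M : ℝ, ∀ᶠ t in (𝓤 : Filter X), M * |w (os (a t))| < |a t none| := by
      intro M
      rcases Ultrafilter.em 𝓤 (fun t => |a t none| ≤ M * |w (os (a t))|) with h | h
      · exact absurd ⟨M, h⟩ hA
      · filter_upwards [h] with t ht using not_le.1 ht
    have hwn : NC (fun x : Option ι → ℝ => w (os x)) :=
      hw.comp (analyticAt_os 0) os_zero fun i => NC.coord (some i)
    obtain ⟨π, b, hπ, hor⟩ := toric ha (NC.coord none) hwn
    have hkey : ∃ r, NC r ∧ r 0 = 0 ∧ ∀ᶠ x in 𝓝 0, w (os (π x)) = π x none * r x := by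
      rcases hor with ⟨r, hr, hre⟩ | ⟨r, hr, hre⟩
      · refine ⟨r, hr, ?_, hre⟩
        by_contra hr0
        have h1 : Tendsto (fun t => |r (b t)|) 𝓤 (𝓝 |r 0|) :=
          (hr.analyticAt.continuousAt.tendsto.comp hπ.tend).abs
        have h2 : 0 < |r 0| := abs_pos.2 hr0
        obtain ⟨t, h3, h4, h5, h6⟩ := ((h1.eventually (lt_mem_nhds (half_lt_self h2))).and
          ((hBb (2 / |r 0|)).and ((hπ.tend.eventually hre).and hπ.eq))).exists
        simp only [h6] at h5
        rw [h5, abs_mul] at h4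
        have h7 : 1 ≤ 2 / |r 0| * |r (b t)| := by
          rw [div_mul_eq_mul_div, le_div_iff₀ h2]; linarith
        nlinarith [abs_nonneg (a t none)]
      · exfalso
        have h1 : Tendsto (fun t => |r (b t)|) 𝓤 (𝓝 |r 0|) :=
          (hr.analyticAt.continuousAt.tendsto.comp hπ.tend).abs
        obtain ⟨t, h3, h4, h5, h6⟩ := ((h1.eventually (gt_mem_nhds (lt_add_one _))).and
          ((hBb (|r 0| + 1)).and ((hπ.tend.eventually hre).and hπ.eq))).exists
        simp only [h6] at h5
        rw [h5, abs_mul] at h4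
        nlinarith [abs_nonneg (w (os (a t)))]
    obtain ⟨r, hr, hr0, hre⟩ := hkey
    refine ⟨π, b, hπ.toUp, ?_, fun i => hπ.nc (some i)⟩
    have hU : AnalyticAt ℝ (fun x => ∑ j ∈ J, r x ^ (d + 1 - j) * q j (os (π x)) + u (π x)) 0 := by
      refine (Finset.analyticAt_fun_sum _ fun j hj => ?_).add (hπ.comp_analytic hu)
      refine (hr.analyticAt.pow _).mul ?_
      exact hπ.comp_analytic (f := fun x => q j (os x))
        (AnalyticAt.comp (g := q j) (by simpa using hq j hj) (analyticAt_os 0))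
    refine (((hπ.nc none).pow (d + 1)).mul (NC.of_unit hU ?_)).congr ?_
    · rw [Finset.sum_eq_zero, zero_add, hπ.map0]
      · exact hu0
      · intro j hj
        have := hJ j hj
        rw [hr0, zero_pow (by omega), zero_mul]
    · filter_upwards [hπ.tendsto.eventually he, hre] with x h1 h2
      rw [h1, h2, mul_add, Finset.mul_sum]
      congr 1
      refine Finset.sum_congr rfl fun j hj => ?_
      have := hJ j hj
      have h3 : π x none ^ (d + 1) = π x none ^ (d + 1 - j) * π x none ^ j := by
        rw [← pow_add]; congr 1; omega
      rw [h3, mul_pow]; ring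

theorem reg {X ι : Type*} {𝓤 : Ultrafilter X} [Fintype ι] (hLU : LU 𝓤 ι) (d : ℕ) :
    ∀ a : X → Option ι → ℝ, Tendsto a 𝓤 (𝓝 0) → ∀ g : (Option ι → ℝ) → ℝ,
      AnalyticAt ℝ g 0 → Ord d g → Good 𝓤 a g := by
  classical
  induction d using Nat.strong_induction_on with
  | _ d ih =>
  intro a ha g hg ho
  cases d with
  | zero =>
    refine ⟨_, a, Up.refl ha, NC.of_unit hg ho.2, fun i => NC.coord _⟩
  | succ d =>
    obtain ⟨φ, c, u, hφ, hφ0, hc, hc0, hu, hu0, he⟩ := tschirnhaus hg ho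
    have hsh : Up 𝓤 a (shear φ) (fun t => oc (a t none - φ (os (a t))) (os (a t))) := by
      refine ⟨shear_analytic hφ, by simp [shear, hφ0], ?_, ?_⟩
      · refine tendsto_pi_nhds.2 fun o => ?_
        cases o with
        | none =>
          have h1 : Tendsto (fun t => φ (os (a t))) 𝓤 (𝓝 (φ 0)) :=
            hφ.continuousAt.tendsto.comp (tendsto_os.comp ha)
          have h2 := (tendsto_pi_nhds.1 ha none).sub h1
          simpa [hφ0] using h2
        | some i => exact tendsto_pi_nhds.1 ha (some i)
      · refine Eventually.of_forall fun t => ?_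
        simp [shear, oc_os]
    refine Good.of_up hsh (fun i => ⟨fun y => y i, NC.coord i, fun x => rfl⟩) ?_
    have ha1 := hsh.tend
    generalize (fun t => oc (a t none - φ (os (a t))) (os (a t))) = a1 at ha1
    obtain ⟨g1, hg1⟩ : ∃ g1, g1 = fun x => g (shear φ x) := ⟨_, rfl⟩
    have he : ∀ᶠ x in 𝓝 0, g1 x =
      ∑ j ∈ Finset.range d, c j (os x) * x none ^ j + x none ^ (d + 1) * u x := by rw [hg1]; exact he
    rw [← hg1]
    set J := (Finset.range d).filter (fun j => ¬ ∀ᶠ y in 𝓝 0, c j y = 0) with hJ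
    have he1 : ∀ᶠ x in 𝓝 0, g1 x = ∑ j ∈ J, c j (os x) * x none ^ j + x none ^ (d + 1) * u x := by
      have h1 : ∀ᶠ y in 𝓝 (0 : ι → ℝ), ∀ j ∈ Finset.range d, j ∉ J → c j y = 0 := by
        rw [Filter.eventually_all_finset]
        intro j hj
        by_cases h : ∀ᶠ y in 𝓝 0, c j y = 0
        · filter_upwards [h] with y hy _ using hy
        · refine Eventually.of_forall fun y hjJ => ?_
          exact absurd (Finset.mem_filter.2 ⟨hj, h⟩) hjJ
      filter_upwards [he, tendsto_os.eventually h1] with x h2 h3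
      rw [h2]
      congr 1
      refine (Finset.sum_subset (Finset.filter_subset _ _) fun j hj hj' => ?_).symm
      rw [h3 j hj hj', zero_mul]
    by_cases hJe : J.Nonempty
    · obtain ⟨π1, b1, hπ1, hn1⟩ := hLU.fam (tendsto_os.comp ha1) J c (fun k _ => hc k)
        (fun k hk => (Finset.mem_filter.1 hk).2)
      have hJd : ∀ j ∈ J, j < d := fun j hj => Finset.mem_range.1 (Finset.mem_filter.1 hj).1
      obtain ⟨π2, b2, w, q, hπ2, hw, hq, k₀, hk₀, hqk⟩ := common_root hπ1.tend J hJe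
        (fun k x => c k (π1 x)) hn1 (fun j => d + 1 - j) (fun j hj => by have := hJd j hj; omega)
      have hπ := hπ1.comp hπ2
      have hL := MM.lift ha1 hπ
      have hw0 : w 0 = 0 := by
        have h1 := (hq k₀ hk₀).2.self_of_nhds
        rw [hπ2.map0, hπ1.map0, hc0 k₀ (hJd k₀ hk₀)] at h1
        have h2 : w 0 ^ (d + 1 - k₀) = 0 := by
          rcases mul_eq_zero.1 h1.symm with h | h
          · exact h
          · exact absurd h hqk
        exact pow_eq_zero_iff (by have := hJd k₀ hk₀; omega) |>.1 h2
      refine Good.of_up hL.toUp (fun i => ⟨_, hπ.nc i, fun x => rfl⟩) ?_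
      refine core2 ih hL.tend J hJd hw hw0 (fun j hj => (hq j hj).1) hk₀ hqk
        (hL.comp_analytic hu) (by rw [hL.map0]; exact hu0) ?_
      have h4 : ∀ᶠ y in 𝓝 (0 : ι → ℝ), ∀ j ∈ J, c j (π1 (π2 y)) = w y ^ (d + 1 - j) * q j y := by
        rw [Filter.eventually_all_finset]
        exact fun j hj => (hq j hj).2
      filter_upwards [hL.tendsto.eventually he1, tendsto_os.eventually h4] with x h5 h6
      rw [h5]
      simp only [os_oc, oc_none]
      congr 1
      exact Finset.sum_congr rfl fun j hj => by rw [h6 j hj]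
    · rw [Finset.not_nonempty_iff_eq_empty] at hJe
      rw [hJe] at he1
      refine ⟨_, a1, Up.refl ha1, ?_, fun i => NC.coord _⟩
      refine (((NC.coord none).pow (d + 1)).mul (NC.of_unit hu hu0)).congr ?_
      filter_upwards [he1] with x hx
      simpa using hx

end Loj

namespace Loj

theorem analyticAt_reindex {ι κ : Type*} [Fintype ι] [Fintype κ] (e : ι → κ) (x : κ → ℝ) :
    AnalyticAt ℝ (fun (x : κ → ℝ) (i : ι) => x (e i)) x :=
  analyticAt_pi_iff.2 fun i => analyticAt_coord (e i) x

theorem tendsto_reindex {ι κ : Type*} [Fintype ι] [Fintype κ] (e : ι → κ) :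
    Tendsto (fun (x : κ → ℝ) (i : ι) => x (e i)) (𝓝 0) (𝓝 0) :=
  (analyticAt_reindex e (0 : κ → ℝ)).continuousAt.tendsto

theorem LU.equiv {X ι κ : Type*} {𝓤 : Ultrafilter X} [Fintype ι] [Fintype κ] (e : ι ≃ κ)
    (h : LU 𝓤 ι) : LU 𝓤 κ := by
  intro a ha f hf hf0
  obtain ⟨π, b, hπ, hn⟩ := h (fun t i => a t (e i)) ((tendsto_reindex e).comp ha)
    (fun x => f (fun k => x (e.symm k)))
    (AnalyticAt.comp (g := f) hf (analyticAt_reindex e.symm 0)) (by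
      intro h0
      apply hf0
      filter_upwards [(tendsto_reindex e).eventually h0] with x hx
      simpa using hx)
  refine ⟨fun x k => π (fun i => x (e i)) (e.symm k), fun t k => b t (e.symm k), ⟨?_, ?_, ?_, ?_⟩, ?_⟩
  · exact AnalyticAt.comp (g := fun (x : ι → ℝ) k => x (e.symm k)) (analyticAt_reindex _ _)
      (AnalyticAt.comp (g := π) hπ.an (analyticAt_reindex e 0))
  · have : (fun i => (0 : κ → ℝ) (e i)) = 0 := rfl
    rw [this, hπ.map0]; rfl
  · exact (tendsto_reindex e.symm).comp hπ.tend
  · filter_upwards [hπ.eq] with t ht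
    funext k
    simp [ht]
  · exact NC.comp hn (analyticAt_reindex e 0) rfl fun i => NC.coord _

theorem LU.empty {X : Type*} (𝓤 : Ultrafilter X) : LU 𝓤 PEmpty := by
  intro a ha f hf hf0
  refine ⟨_, a, Up.refl ha, NC.of_unit hf fun h => hf0 ?_⟩
  refine Eventually.of_forall fun x => ?_
  rw [Subsingleton.elim x 0, h]

theorem exists_dir {ι : Type*} [Fintype ι] {f : (ι → ℝ) → ℝ} (hf : AnalyticAt ℝ f 0)
    (hf0 : ¬ ∀ᶠ x in 𝓝 0, f x = 0) : ∃ v : ι → ℝ, ¬ ∀ᶠ t in 𝓝 (0 : ℝ), f (t • v) = 0 := by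
  by_contra! hcon
  apply hf0
  obtain ⟨r, hr, hball⟩ := Metric.eventually_nhds_iff_ball.1 hf.eventually_analyticAt
  filter_upwards [Metric.ball_mem_nhds (0 : ι → ℝ) hr] with v hv
  have hv' : ‖v‖ < r := by simpa using hv
  have h1 : AnalyticOnNhd ℝ (fun t : ℝ => f (t • v)) (Set.Icc 0 1) := by
    intro t ht
    refine AnalyticAt.comp (g := f) (hball _ ?_) (analyticAt_id.smul analyticAt_const)
    rw [mem_ball_zero_iff]
    show ‖t • v‖ < r
    rw [norm_smul, Real.norm_eq_abs, abs_of_nonneg ht.1]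
    nlinarith [ht.2, norm_nonneg v]
  have h2 := h1.eqOn_zero_of_preconnected_of_eventuallyEq_zero isPreconnected_Icc
    (Set.left_mem_Icc.2 zero_le_one) (hcon v)
  simpa using h2 (Set.right_mem_Icc.2 zero_le_one)

theorem LU.option {X ι : Type*} {𝓤 : Ultrafilter X} [Fintype ι] (h : LU 𝓤 ι) : LU 𝓤 (Option ι) := by
  intro a ha f hf hf0
  by_cases hf00 : f 0 = 0
  swap
  · exact ⟨_, a, Up.refl ha, NC.of_unit hf hf00⟩
  obtain ⟨v, hv⟩ := exists_dir hf hf0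
  have hv0 : v ≠ 0 := by
    rintro rfl
    exact hv (by simp [hf00])
  have he0 : (e0 : Option ι → ℝ) ≠ 0 := by
    intro h
    have := congrFun h none
    simp [e0] at this
  obtain ⟨A, hA⟩ := SeparatingDual.exists_continuousLinearEquiv_apply_eq (R := ℝ) he0 hv0
  have hAup : Up 𝓤 a (fun x => A x) (fun t => A.symm (a t)) := by
    refine ⟨(A : (Option ι → ℝ) →L[ℝ] (Option ι → ℝ)).analyticAt 0, map_zero A, ?_, ?_⟩
    · have := (A.symm.continuous.tendsto 0).comp ha
      simpa [Function.comp_def] using this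
    · simp
  have hg : AnalyticAt ℝ (fun x => f (A x)) 0 := hAup.comp_analytic hf
  have hline : ∀ t : ℝ, A (oc t 0) = t • v := by
    intro t
    rw [← hA, ← map_smul]
    congr 1
    funext o
    cases o <;> simp [e0]
  have hfl : AnalyticAt ℝ (fun t : ℝ => f (t • v)) 0 :=
    AnalyticAt.comp (g := f) (by simpa using hf) (analyticAt_id.smul analyticAt_const)
  obtain ⟨n, H, hH, hH0, hHe⟩ := hfl.exists_eventuallyEq_pow_smul_nonzero_iff.2 hv
  have hord : ¬ ∀ k < n + 1, Dz^[k] (fun x => f (A x)) 0 = 0 := by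
    intro h0
    obtain ⟨c, w, hc, hw, h1, h2, -⟩ := taylor (n + 1) _ hg
    have hcz : ∀ j < n + 1, c j 0 = 0 := by
      intro j hj
      have := h2.self_of_nhds j hj
      rw [oc_zero, h0 j hj] at this
      have hf : (j.factorial : ℝ) ≠ 0 := by exact_mod_cast j.factorial_ne_zero
      simpa [hf] using this.symm
    have hl : AnalyticAt ℝ (fun t : ℝ => oc t (0 : ι → ℝ)) 0 :=
      AnalyticAt_oc analyticAt_id analyticAt_const
    have hl' : Tendsto (fun t : ℝ => oc t (0 : ι → ℝ)) (𝓝 0) (𝓝 0) := by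
      simpa using hl.continuousAt.tendsto
    have hwc : Tendsto (fun t : ℝ => t * w (oc t 0)) (𝓝[≠] 0) (𝓝 (0 * w 0)) :=
      (tendsto_id.mul (hw.continuousAt.tendsto.comp hl')).mono_left nhdsWithin_le_nhds
    have hHc : Tendsto H (𝓝[≠] 0) (𝓝 (H 0)) := hH.continuousAt.tendsto.mono_left nhdsWithin_le_nhds
    apply hH0
    rw [zero_mul] at hwc
    refine tendsto_nhds_unique (hHc.congr' ?_) hwc
    filter_upwards [(hl'.eventually h1).filter_mono nhdsWithin_le_nhds,
      hHe.filter_mono nhdsWithin_le_nhds, self_mem_nhdsWithin] with t h3 h4 h5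
    have hs : ∑ j ∈ Finset.range (n + 1), c j (os (oc t (0 : ι → ℝ))) * (oc t (0 : ι → ℝ)) none ^ j
        = 0 := Finset.sum_eq_zero fun j hj => by
      rw [os_oc, hcz j (by simpa using hj), zero_mul]
    rw [hs, zero_add, hline, h4, oc_none] at h3
    have h5 : t ≠ 0 := h5
    apply mul_left_cancel₀ (pow_ne_zero n h5)
    simp at h3
    rw [h3]; ring
  obtain ⟨e, -, hoe⟩ := exists_ord hord
  obtain ⟨π, b, hπ, hn, -⟩ := reg h e _ hAup.tend _ hg hoe
  exact ⟨_, b, hAup.comp hπ, hn⟩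

theorem LU.all {X : Type*} (𝓤 : Ultrafilter X) (ι : Type) [Fintype ι] : LU 𝓤 ι := by
  refine Fintype.induction_empty_option (P := fun (α : Type) [Fintype α] => LU 𝓤 α) ?_ ?_ ?_ ι
  · intro α β _ e h
    let := Fintype.ofEquiv β e.symm
    exact LU.equiv e (by convert h)
  · exact LU.empty 𝓤
  · intro α _ h
    exact LU.option h

end Loj

namespace Loj

theorem nc_deriv {ι : Type*} [Fintype ι] [DecidableEq ι] {G u : (ι → ℝ) → ℝ} {α : ι → ℕ} {y : ι → ℝ}
    (hG : DifferentiableAt ℝ G y) (hu : DifferentiableAt ℝ u y)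
    (he : ∀ᶠ x in 𝓝 y, G x = (∏ i, x i ^ α i) * u x) (i : ι) :
    fderiv ℝ G y (Pi.single i (y i)) =
      (∏ i, y i ^ α i) * (α i * u y + fderiv ℝ u y (Pi.single i (y i))) := by
  have hl : HasDerivAt (fun t : ℝ => y + t • (Pi.single i (y i) : ι → ℝ)) (Pi.single i (y i)) 0 := by
    simpa using ((hasDerivAt_id (0 : ℝ)).smul_const (Pi.single i (y i) : ι → ℝ)).const_add y
  have hlc : Tendsto (fun t : ℝ => y + t • (Pi.single i (y i) : ι → ℝ)) (𝓝 0) (𝓝 y) := by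
    simpa using hl.continuousAt.tendsto
  have h1 : HasDerivAt (fun t : ℝ => G (y + t • (Pi.single i (y i) : ι → ℝ)))
      (fderiv ℝ G y (Pi.single i (y i))) 0 := by
    have h : HasFDerivAt G (fderiv ℝ G y) (y + (0 : ℝ) • (Pi.single i (y i) : ι → ℝ)) := by
      simpa using hG.hasFDerivAt
    exact h.comp_hasDerivAt 0 hl
  have h2 : HasDerivAt (fun t : ℝ => u (y + t • (Pi.single i (y i) : ι → ℝ)))
      (fderiv ℝ u y (Pi.single i (y i))) 0 := by
    have h : HasFDerivAt u (fderiv ℝ u y) (y + (0 : ℝ) • (Pi.single i (y i) : ι → ℝ)) := by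
      simpa using hu.hasFDerivAt
    exact h.comp_hasDerivAt 0 hl
  have h3 : HasDerivAt (fun t : ℝ => (∏ i, y i ^ α i) * (1 + t) ^ α i)
      ((∏ i, y i ^ α i) * α i) 0 := by
    have h := (((hasDerivAt_id (0 : ℝ)).const_add 1).pow (α i)).const_mul (∏ i, y i ^ α i)
    simpa using h
  have h4 := h3.mul h2
  have h5 := h4.congr_of_eventuallyEq (f₁ := fun t : ℝ => G (y + t • (Pi.single i (y i) : ι → ℝ))) (by
    filter_upwards [hlc.eventually he] with t ht
    rw [ht]
    simp only [Pi.mul_apply]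
    congr 1
    have : ∀ j, (y + t • (Pi.single i (y i) : ι → ℝ)) j ^ α j =
        y j ^ α j * (if j = i then (1 + t) ^ α i else 1) := by
      intro j
      by_cases hj : j = i
      · subst hj
        simp only [Pi.add_apply, Pi.smul_apply, Pi.single_eq_same, smul_eq_mul, if_true]
        rw [← mul_pow]; ring
      · simp [hj]
    simp only [this]
    rw [Finset.prod_mul_distrib]
    simp)
  rw [h1.unique h5]
  simp
  ring

theorem nc_loj {ι : Type*} [Fintype ι] {G : (ι → ℝ) → ℝ} (hG : NC G) (hG0 : G 0 = 0) :
    ∃ ζ : ℝ, ζ ∈ Set.Ioc (0 : ℝ) (1 / 2) ∧ ∃ C > (0 : ℝ), ∀ᶠ y in 𝓝 0,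
      |G y| ^ (1 - ζ) ≤ C * ‖fderiv ℝ G y‖ := by
  classical
  have hGa := hG.analyticAt
  obtain ⟨α, u, hu, hu0, he⟩ := hG
  have hα : ∃ i, 0 < α i := by
    by_contra! h
    have h0 := he.self_of_nhds
    rw [hG0, Finset.prod_eq_one (fun i _ => by rw [Nat.le_zero.1 (h i), pow_zero]), one_mul] at h0
    exact hu0 h0.symm
  set N := ∑ i, α i with hN
  have hN1 : 1 ≤ N := by
    obtain ⟨i, hi⟩ := hα
    exact hi.trans_le (Finset.single_le_sum (fun j _ => Nat.zero_le _) (Finset.mem_univ i))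
  have hN1' : (1 : ℝ) ≤ N := by exact_mod_cast hN1
  set ζ : ℝ := ((N + 1 : ℕ) : ℝ)⁻¹ with hζ
  have hζ0 : 0 < ζ := by positivity
  have hζ1 : ζ ≤ 1 / 2 := by
    rw [hζ, one_div]
    apply inv_anti₀ (by norm_num)
    push_cast; linarith
  set m := |u 0| with hm
  have hm0 : 0 < m := abs_pos.2 hu0
  set K : ℝ := 2 / m with hK
  have hK0 : 0 < K := by positivity
  refine ⟨ζ, ⟨hζ0, hζ1⟩, 8 * K ^ ζ, by positivity, ?_⟩
  have huc : Tendsto (fun y => |u y|) (𝓝 0) (𝓝 m) := hu.continuousAt.tendsto.abs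
  have hdu : Tendsto (fun y => ‖fderiv ℝ u y‖ * ‖y‖) (𝓝 0) (𝓝 0) := by
    have := hu.fderiv.continuousAt.tendsto.norm.mul (tendsto_norm_zero (E := ι → ℝ))
    simpa using this
  filter_upwards [he.eventually_nhds, hu.eventually_analyticAt, hGa.eventually_analyticAt,
    huc.eventually (lt_mem_nhds (half_lt_self hm0)),
    huc.eventually (gt_mem_nhds (show m < 2 * m by linarith)),
    hdu.eventually (gt_mem_nhds (show 0 < m / 4 by positivity)),
    Metric.ball_mem_nhds (0 : ι → ℝ) one_pos] with y h1 h2 h3 h4 h5 h6 h7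
  have h7 : ‖y‖ < 1 := by simpa using h7
  by_cases hGy : G y = 0
  · rw [hGy, abs_zero, Real.zero_rpow (by linarith)]
    positivity
  have hGy' : 0 < |G y| := abs_pos.2 hGy
  have hval := h1.self_of_nhds
  set P : ℝ := ∏ i, y i ^ α i with hP
  have hPu : |G y| = |P| * |u y| := by rw [hval, abs_mul]
  obtain ⟨i, hi, hmin⟩ := Finset.exists_min_image (Finset.univ.filter (fun i => 0 < α i))
    (fun i => |y i|) (by obtain ⟨i, hi⟩ := hα; exact ⟨i, by simpa using hi⟩)
  have hi : 0 < α i := by simpa using hi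
  have hmin : ∀ j, 0 < α j → |y i| ≤ |y j| := fun j hj => hmin j (by simpa using hj)
  have hyi1 : |y i| ≤ ‖y‖ := norm_le_pi_norm y i
  have hPlow : |y i| ^ (N + 1) ≤ |P| := by
    calc |y i| ^ (N + 1) ≤ |y i| ^ N :=
          pow_le_pow_of_le_one (abs_nonneg _) (by linarith) (by omega)
      _ = ∏ j, |y i| ^ α j := by rw [hN, Finset.prod_pow_eq_pow_sum]
      _ ≤ ∏ j, |y j| ^ α j := by
          refine Finset.prod_le_prod (fun j _ => by positivity) fun j _ => ?_
          rcases Nat.eq_zero_or_pos (α j) with h | h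
          · simp [h]
          · exact pow_le_pow_left₀ (abs_nonneg _) (hmin j h) _
      _ = |P| := by rw [hP, Finset.abs_prod]; simp [abs_pow]
  have hyK : |y i| ≤ K ^ ζ * |G y| ^ ζ := by
    have h8 : |y i| ^ (N + 1) ≤ K * |G y| := by
      refine hPlow.trans ?_
      rw [hPu, hK, div_mul_eq_mul_div, le_div_iff₀ hm0]
      nlinarith [abs_nonneg P]
    have h9 := Real.rpow_le_rpow (by positivity) h8 hζ0.le
    rw [hζ, Real.pow_rpow_inv_natCast (abs_nonneg _) (by omega), ← hζ,
      Real.mul_rpow hK0.le (abs_nonneg _)] at h9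
    exact h9
  have hd := nc_deriv h3.differentiableAt h2.differentiableAt h1 i
  have hsn : ‖(Pi.single i (y i) : ι → ℝ)‖ = |y i| := by
    rw [Pi.norm_single, Real.norm_eq_abs]
  have hdu' : |fderiv ℝ u y (Pi.single i (y i))| ≤ m / 4 := by
    have := (fderiv ℝ u y).le_opNorm (Pi.single i (y i))
    rw [hsn, Real.norm_eq_abs] at this
    nlinarith [norm_nonneg (fderiv ℝ u y)]
  have hlow : m / 4 ≤ |(α i : ℝ) * u y + fderiv ℝ u y (Pi.single i (y i))| := by
    have h8 : |u y| ≤ |(α i : ℝ) * u y| := by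
      rw [abs_mul, Nat.abs_cast]
      have : (1 : ℝ) ≤ α i := by exact_mod_cast hi
      nlinarith [abs_nonneg (u y)]
    have h9 := abs_sub_abs_le_abs_sub ((α i : ℝ) * u y) (-(fderiv ℝ u y (Pi.single i (y i))))
    rw [abs_neg, sub_neg_eq_add] at h9
    linarith
  have hmain : |G y| ≤ 8 * (‖fderiv ℝ G y‖ * |y i|) := by
    have h8 := (fderiv ℝ G y).le_opNorm (Pi.single i (y i))
    rw [hsn, Real.norm_eq_abs, hd, abs_mul] at h8
    have h9 : |P| * (m / 4) ≤ ‖fderiv ℝ G y‖ * |y i| :=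
      (mul_le_mul_of_nonneg_left hlow (abs_nonneg _)).trans h8
    have h10 : |P| * |u y| ≤ |P| * (2 * m) := mul_le_mul_of_nonneg_left h5.le (abs_nonneg _)
    rw [hPu]; linarith
  have hfin : |G y| ≤ 8 * K ^ ζ * ‖fderiv ℝ G y‖ * |G y| ^ ζ := by
    have := mul_le_mul_of_nonneg_left hyK (norm_nonneg (fderiv ℝ G y))
    linarith
  rw [Real.rpow_sub hGy', Real.rpow_one, div_le_iff₀ (Real.rpow_pos_of_pos hGy' _)]
  exact hfin

theorem lojasiewicz {ι : Type} [Fintype ι] {F : (ι → ℝ) → ℝ} (hF : AnalyticAt ℝ F 0) (hF0 : F 0 = 0) :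
    ∃ ζ : ℝ, ζ ∈ Set.Ioc (0 : ℝ) (1 / 2) ∧ ∃ C > (0 : ℝ), ∀ᶠ y in 𝓝 0,
      |F y| ^ (1 - ζ) ≤ C * ‖fderiv ℝ F y‖ := by
  by_contra hcon0
  have hcon : ∀ ζ ∈ Set.Ioc (0 : ℝ) (1 / 2), ∀ C > (0 : ℝ), ¬ ∀ᶠ y in 𝓝 0,
      |F y| ^ (1 - ζ) ≤ C * ‖fderiv ℝ F y‖ := fun ζ hζ C hC h => hcon0 ⟨ζ, hζ, C, hC, h⟩
  have hz : ¬ ∀ᶠ x in 𝓝 0, F x = 0 := by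
    intro h
    refine hcon (1 / 2) ⟨by norm_num, le_rfl⟩ 1 one_pos ?_
    filter_upwards [h] with x hx
    rw [hx, abs_zero, Real.zero_rpow (by norm_num)]
    positivity
  have hs : ∀ k : ℕ, ∃ x : ι → ℝ, ‖x‖ < 1 / (k + 1 : ℝ) ∧ |F x| < 1 ∧
      (k + 1 : ℝ) * ‖fderiv ℝ F x‖ < |F x| ^ (1 - 1 / (k + 2 : ℝ)) := by
    intro k
    have h1 := hcon (1 / (k + 2 : ℝ)) ⟨by positivity, by
      apply one_div_le_one_div_of_le (by norm_num)
      have : (0 : ℝ) ≤ k := by positivity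
      linarith⟩ (k + 1) (by positivity)
    have hc : Tendsto (fun x => |F x|) (𝓝 0) (𝓝 0) := by
      have := hF.continuousAt.tendsto.abs
      simpa [hF0] using this
    obtain ⟨x, hx, hx1, hx2⟩ := ((Filter.not_eventually.1 h1).and_eventually
      ((hc.eventually (gt_mem_nhds one_pos)).and
        (Metric.ball_mem_nhds (0 : ι → ℝ) (show (0 : ℝ) < 1 / (k + 1 : ℝ) by positivity)))).exists
    exact ⟨x, by simpa using hx2, hx1, not_le.1 hx⟩
  choose a ha1 ha2 ha3 using hs
  set 𝓤 : Ultrafilter ℕ := hyperfilter ℕ with h𝓤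
  have hle : (𝓤 : Filter ℕ) ≤ atTop := by
    rw [← Nat.cofinite_eq_atTop]; exact hyperfilter_le_cofinite
  have ha : Tendsto a 𝓤 (𝓝 0) := by
    refine Tendsto.mono_left ?_ hle
    exact squeeze_zero_norm (fun k => (ha1 k).le) tendsto_one_div_add_atTop_nhds_zero_nat
  obtain ⟨π, b, hπ, hn⟩ := LU.all 𝓤 ι a ha F hF hz
  obtain ⟨ζ, ⟨hζ0, hζ1⟩, C, hC, hloj⟩ := nc_loj hn (by rw [hπ.map0, hF0])
  have hdπ : Tendsto (fun y => ‖fderiv ℝ π y‖) (𝓝 0) (𝓝 ‖fderiv ℝ π 0‖) :=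
    hπ.an.fderiv.continuousAt.tendsto.norm
  set D := ‖fderiv ℝ π 0‖ + 1 with hD
  have hD0 : 0 < D := by positivity
  have hev : ∀ᶠ y in 𝓝 0, |F (π y)| ^ (1 - ζ) ≤ C * D * ‖fderiv ℝ F (π y)‖ := by
    filter_upwards [hloj, hdπ.eventually (gt_mem_nhds (lt_add_one _)), hπ.an.eventually_analyticAt,
      hπ.tendsto.eventually hF.eventually_analyticAt] with y h1 h2 h3 h4
    refine h1.trans ?_
    have h5 : fderiv ℝ (fun x => F (π x)) y = (fderiv ℝ F (π y)).comp (fderiv ℝ π y) :=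
      fderiv_comp y h4.differentiableAt h3.differentiableAt
    rw [h5, mul_assoc]
    refine mul_le_mul_of_nonneg_left ?_ hC.le
    refine (ContinuousLinearMap.opNorm_comp_le _ _).trans ?_
    rw [mul_comm]
    exact mul_le_mul_of_nonneg_right h2.le (norm_nonneg _)
  have hk1 : ∀ᶠ k : ℕ in (𝓤 : Filter ℕ), C * D ≤ k + 1 := by
    refine Filter.Eventually.filter_mono hle ?_
    filter_upwards [tendsto_natCast_atTop_atTop.eventually_ge_atTop (C * D)] with k hk
    linarith
  have hk2 : ∀ᶠ k : ℕ in (𝓤 : Filter ℕ), 1 / (k + 2 : ℝ) ≤ ζ := by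
    refine Filter.Eventually.filter_mono hle ?_
    filter_upwards [tendsto_natCast_atTop_atTop.eventually_ge_atTop (1 / ζ)] with k hk
    rw [div_le_iff₀ (by positivity)]
    rw [div_le_iff₀ hζ0] at hk
    nlinarith
  obtain ⟨k, h1, h2, h3, h4⟩ := ((hπ.tend.eventually hev).and (hπ.eq.and (hk1.and hk2))).exists
  rw [h2] at h1
  have h5 := ha3 k
  have hFk : 0 < |F (a k)| := by
    rw [abs_pos]
    intro h
    rw [h, abs_zero, Real.zero_rpow (by linarith)] at h5
    have : 0 ≤ (k + 1 : ℝ) * ‖fderiv ℝ F (a k)‖ := by positivity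
    linarith
  have h6 : |F (a k)| ^ (1 - 1 / (k + 2 : ℝ)) ≤ |F (a k)| ^ (1 - ζ) :=
    Real.rpow_le_rpow_of_exponent_ge hFk (ha2 k).le (by linarith)
  have h7 : C * D * ‖fderiv ℝ F (a k)‖ ≤ (k + 1 : ℝ) * ‖fderiv ℝ F (a k)‖ :=
    mul_le_mul_of_nonneg_right h3 (norm_nonneg _)
  linarith

end Loj

namespace Loj

theorem loj_fd {E : Type*} [NormedAddCommGroup E] [NormedSpace ℝ E] [FiniteDimensional ℝ E]
    {F : E → ℝ} (hF : AnalyticAt ℝ F 0) (hF0 : F 0 = 0) :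
    ∃ ζ : ℝ, ζ ∈ Set.Ioc (0 : ℝ) (1 / 2) ∧ ∃ C > (0 : ℝ), ∀ᶠ y in 𝓝 0,
      |F y| ^ (1 - ζ) ≤ C * ‖fderiv ℝ F y‖ := by
  let L : E ≃L[ℝ] (Fin (Module.finrank ℝ E) → ℝ) :=
    (Module.finBasis ℝ E).equivFun.toContinuousLinearEquiv
  have hF' : AnalyticAt ℝ (fun y => F (L.symm y)) 0 := by
    have h : AnalyticAt ℝ F ((L.symm : (Fin (Module.finrank ℝ E) → ℝ) →L[ℝ] E) 0) := by simpa using hF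
    exact h.comp ((L.symm : (Fin (Module.finrank ℝ E) → ℝ) →L[ℝ] E).analyticAt 0)
  obtain ⟨ζ, hζ, C, hC, h⟩ := lojasiewicz hF' (by simp [hF0])
  refine ⟨ζ, hζ, C * (‖(L.symm : (Fin (Module.finrank ℝ E) → ℝ) →L[ℝ] E)‖ + 1), by positivity, ?_⟩
  have hL : Tendsto L (𝓝 0) (𝓝 0) := by simpa using L.continuous.tendsto 0
  filter_upwards [hL.eventually h, hF.eventually_analyticAt] with y hy hd
  simp only [ContinuousLinearEquiv.symm_apply_apply] at hy
  refine hy.trans ?_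
  rw [mul_assoc]
  refine mul_le_mul_of_nonneg_left ?_ hC.le
  have h1 : fderiv ℝ (fun y => F (L.symm y)) (L y) =
      (fderiv ℝ F y).comp (L.symm : (Fin (Module.finrank ℝ E) → ℝ) →L[ℝ] E) := by
    have h2 : HasFDerivAt F (fderiv ℝ F y) ((L.symm : (Fin (Module.finrank ℝ E) → ℝ) →L[ℝ] E) (L y)) := by
      simpa using hd.differentiableAt.hasFDerivAt
    exact (h2.comp (L y) (L.symm : (Fin (Module.finrank ℝ E) → ℝ) →L[ℝ] E).hasFDerivAt).fderiv
  rw [h1, mul_comm]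
  refine (ContinuousLinearMap.opNorm_comp_le _ _).trans ?_
  exact mul_le_mul_of_nonneg_left (by linarith) (norm_nonneg _)

theorem loj_chart {E : Type*} [NormedAddCommGroup E] [NormedSpace ℝ E] [FiniteDimensional ℝ E]
    {f p : E → ℝ} {Φ : E → E} (hf : ∀ x, AnalyticAt ℝ f x) (hΦ : AnalyticAt ℝ Φ 0)
    (hp : ∀ x, 0 ≤ p x)
    (hb : ∀ᶠ B in 𝓝 0, ∀ h, |fderiv ℝ f (Φ B) (fderiv ℝ Φ B h)| ≤ p (Φ B) * ‖fderiv ℝ Φ B h‖) :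
    ∃ ζ : ℝ, ζ ∈ Set.Ioc (0 : ℝ) (1 / 2) ∧ ∃ C > (0 : ℝ), ∀ᶠ B in 𝓝 0,
      |f (Φ B) - f (Φ 0)| ^ (1 - ζ) ≤ C * p (Φ B) := by
  have hF : AnalyticAt ℝ (fun x => f (Φ x) - f (Φ 0)) 0 :=
    ((hf (Φ 0)).comp hΦ).sub analyticAt_const
  obtain ⟨ζ, hζ, C, hC, hloj⟩ := loj_fd hF (by simp)
  have hD : ∀ᶠ B in 𝓝 0, ‖fderiv ℝ Φ B‖ < ‖fderiv ℝ Φ 0‖ + 1 :=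
    hΦ.fderiv.continuousAt.tendsto.norm.eventually (gt_mem_nhds (lt_add_one _))
  refine ⟨ζ, hζ, C * (‖fderiv ℝ Φ 0‖ + 1), by positivity, ?_⟩
  filter_upwards [hloj, hD, hΦ.eventually_analyticAt, hb] with B h1 h2 h3 h4
  refine h1.trans ?_
  rw [mul_assoc]
  refine mul_le_mul_of_nonneg_left ?_ hC.le
  rw [fderiv_sub_const]
  have hcomp : fderiv ℝ (fun x => f (Φ x)) B = (fderiv ℝ f (Φ B)).comp (fderiv ℝ Φ B) :=
    fderiv_comp B (hf _).differentiableAt h3.differentiableAt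
  rw [hcomp]
  refine ContinuousLinearMap.opNorm_le_bound _ (mul_nonneg (by positivity) (hp _)) fun h => ?_
  refine (h4 h).trans ?_
  have h5 := (fderiv ℝ Φ B).le_of_opNorm_le h2.le h
  calc p (Φ B) * ‖fderiv ℝ Φ B h‖ ≤ p (Φ B) * ((‖fderiv ℝ Φ 0‖ + 1) * ‖h‖) :=
        mul_le_mul_of_nonneg_left h5 (hp _)
    _ = _ := by ring

theorem line_deriv {E F : Type*} [NormedAddCommGroup E] [NormedSpace ℝ E] [NormedAddCommGroup F]
    [NormedSpace ℝ F] {G : E → F} {x : E} (hG : DifferentiableAt ℝ G x) (h : E) :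
    HasDerivAt (fun t : ℝ => G (x + t • h)) (fderiv ℝ G x h) 0 := by
  have hl : HasDerivAt (fun t : ℝ => x + t • h) h 0 := by
    simpa using ((hasDerivAt_id (0 : ℝ)).smul_const h).const_add x
  have h1 : HasFDerivAt G (fderiv ℝ G x) (x + (0 : ℝ) • h) := by
    simpa using hG.hasFDerivAt
  exact h1.comp_hasDerivAt 0 hl

theorem line_tendsto {E : Type*} [NormedAddCommGroup E] [NormedSpace ℝ E] (x h : E) :
    Tendsto (fun t : ℝ => x + t • h) (𝓝 0) (𝓝 x) := by
  have : Continuous (fun t : ℝ => x + t • h) := by fun_prop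
  simpa using this.tendsto 0

section U
open scoped Matrix.Norms.Frobenius
variable {n : ℕ}

theorem frobC_eq (A : Matrix (Fin n) (Fin n) ℂ) : frobC A = ‖A‖ := by
  rw [Matrix.frobenius_norm_def, frobC, Real.sqrt_eq_rpow]
  simp [Complex.normSq_eq_norm_sq]

theorem re_sum_eq (P Z : Matrix (Fin n) (Fin n) ℂ) :
    ∑ i, ∑ j, ((starRingEnd ℂ) (P i j) * Z i j).re = (trace (Pᴴ * Z)).re := by
  simp only [trace, diag_apply, mul_apply, conjTranspose_apply, Complex.re_sum]
  rw [Finset.sum_comm]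
  rfl

theorem re_sum_le (P Z : Matrix (Fin n) (Fin n) ℂ) :
    |∑ i, ∑ j, ((starRingEnd ℂ) (P i j) * Z i j).re| ≤ frobC P * frobC Z := by
  have h1 : |∑ i, ∑ j, ((starRingEnd ℂ) (P i j) * Z i j).re| ≤
      ∑ p : Fin n × Fin n, ‖P p.1 p.2‖ * ‖Z p.1 p.2‖ := by
    rw [← Fintype.sum_prod_type' (f := fun i j => ((starRingEnd ℂ) (P i j) * Z i j).re)]
    refine (Finset.abs_sum_le_sum_abs _ _).trans (Finset.sum_le_sum fun p _ => ?_)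
    refine (Complex.abs_re_le_norm _).trans ?_
    simp
  refine h1.trans ((Real.sum_mul_le_sqrt_mul_sqrt _ _ _).trans (le_of_eq ?_))
  simp only [frobC, Complex.normSq_eq_norm_sq]
  rw [Fintype.sum_prod_type, Fintype.sum_prod_type]

theorem proj_pair (g : Matrix (Fin n) (Fin n) ℂ → Matrix (Fin n) (Fin n) ℂ)
    {W Z : Matrix (Fin n) (Fin n) ℂ} (hW : Wᴴ * W = 1) (hZ : Zᴴ * W + Wᴴ * Z = 0) :
    ∑ i, ∑ j, ((starRingEnd ℂ) (g W i j) * Z i j).re =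
    ∑ i, ∑ j, ((starRingEnd ℂ) (projGradC g W i j) * Z i j).re := by
  rw [re_sum_eq, re_sum_eq]
  have hW' : W * Wᴴ = 1 := mul_eq_one_comm.1 hW
  set Λ := Wᴴ * g W with hΛ
  set S := Wᴴ * Z with hS
  have hSk : Sᴴ = -S := by
    rw [hS, conjTranspose_mul, conjTranspose_conjTranspose]
    exact eq_neg_of_add_eq_zero_left hZ
  have e1 : (g W)ᴴ * Z = Λᴴ * S := by
    rw [hΛ, hS, conjTranspose_mul, conjTranspose_conjTranspose, Matrix.mul_assoc,
      ← Matrix.mul_assoc W, hW', Matrix.one_mul]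
  have e2 : (projGradC g W)ᴴ * Z = (1 / 2 : ℂ) • (Λᴴ * S - Λ * S) := by
    rw [projGradC, ← hΛ, conjTranspose_mul, Matrix.mul_assoc, ← hS, conjTranspose_smul,
      conjTranspose_sub, conjTranspose_conjTranspose, Matrix.smul_mul, Matrix.sub_mul]
    simp
  have e3 : (trace (Λ * S)).re = -(trace (Λᴴ * S)).re := by
    have h := trace_conjTranspose (Λ * S)
    rw [conjTranspose_mul, hSk, Matrix.neg_mul, trace_neg, trace_mul_comm] at h
    have h2 := congrArg Complex.re h
    simp only [Complex.neg_re, Complex.star_def, Complex.conj_re] at h2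
    exact h2.symm
  rw [e1, e2, trace_smul, trace_sub]
  have : ∀ z : ℂ, ((1 / 2 : ℂ) • z).re = z.re / 2 := by
    intro z
    simp [Complex.mul_re]; ring
  rw [this, Complex.sub_re, e3]
  ring

/-- Skew-Hermitian part. -/
noncomputable def skewL (n : ℕ) : Matrix (Fin n) (Fin n) ℂ →L[ℝ] Matrix (Fin n) (Fin n) ℂ :=
  LinearMap.toContinuousLinearMap
    { toFun := fun B => (1 / 2 : ℝ) • (B - Bᴴ)
      map_add' := fun A B => by rw [conjTranspose_add, ← smul_add]; congr 1; abel
      map_smul' := fun c B => by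
        rw [conjTranspose_smul, star_trivial, ← smul_sub, smul_comm]; rfl }

theorem skewL_apply (B : Matrix (Fin n) (Fin n) ℂ) : skewL n B = (1 / 2 : ℝ) • (B - Bᴴ) := rfl

theorem skewL_skew (B : Matrix (Fin n) (Fin n) ℂ) : (skewL n B)ᴴ = - skewL n B := by
  rw [skewL_apply, conjTranspose_smul, star_trivial, conjTranspose_sub, conjTranspose_conjTranspose,
    ← smul_neg, neg_sub]

theorem skewL_of {B : Matrix (Fin n) (Fin n) ℂ} (h : Bᴴ = -B) : skewL n B = B := by
  rw [skewL_apply, h, sub_neg_eq_add, ← two_smul ℝ B, smul_smul]; norm_num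

noncomputable def conjL (n : ℕ) : Matrix (Fin n) (Fin n) ℂ →L[ℝ] Matrix (Fin n) (Fin n) ℂ :=
  LinearMap.toContinuousLinearMap
    { toFun := fun B => Bᴴ
      map_add' := fun A B => by rw [conjTranspose_add]
      map_smul' := fun c B => by
        rw [conjTranspose_smul, star_trivial]; rfl }

/-- Cayley chart. -/
noncomputable def cay (U B : Matrix (Fin n) (Fin n) ℂ) : Matrix (Fin n) (Fin n) ℂ :=
  U * (1 + skewL n B) * Ring.inverse (1 - skewL n B)

theorem cay_analytic (U : Matrix (Fin n) (Fin n) ℂ) : AnalyticAt ℝ (cay U) 0 := by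
  have : CompleteSpace (Matrix (Fin n) (Fin n) ℂ) := FiniteDimensional.complete ℝ _
  have hs : AnalyticAt ℝ (fun B => skewL n B) 0 := (skewL n).analyticAt 0
  have hi : AnalyticAt ℝ (Ring.inverse : Matrix (Fin n) (Fin n) ℂ → _) (1 - skewL n 0) := by
    have := analyticAt_inverse (𝕜 := ℝ) (1 : (Matrix (Fin n) (Fin n) ℂ)ˣ)
    simpa using this
  exact (analyticAt_const.mul (analyticAt_const.add hs)).mul
    (hi.comp (f := fun B => 1 - skewL n B) (analyticAt_const.sub hs))

theorem cay_zero (U : Matrix (Fin n) (Fin n) ℂ) : cay U 0 = U := by simp [cay]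

theorem cay_unitary {U : Matrix (Fin n) (Fin n) ℂ} (hU : Uᴴ * U = 1) :
    ∀ᶠ B in 𝓝 0, (cay U B)ᴴ * cay U B = 1 := by
  have : CompleteSpace (Matrix (Fin n) (Fin n) ℂ) := FiniteDimensional.complete ℝ _
  have hc : Tendsto (fun B => 1 - skewL n B) (𝓝 0) (𝓝 1) := by
    have : Continuous (fun B => 1 - skewL n B) := by fun_prop
    simpa using this.tendsto 0
  filter_upwards [hc.eventually (Units.nhds (1 : (Matrix (Fin n) (Fin n) ℂ)ˣ))] with B hB
  have hB : IsUnit (1 - skewL n B) := hB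
  set A := skewL n B with hA
  have hAs : Aᴴ = -A := skewL_skew B
  have h1 := Ring.mul_inverse_cancel _ hB
  have h2 := congrArg conjTranspose h1
  simp only [cay, ← hA]
  set R := Ring.inverse (1 - A)
  rw [conjTranspose_mul, conjTranspose_sub, hAs, conjTranspose_one, sub_neg_eq_add] at h2
  rw [conjTranspose_mul, conjTranspose_mul, conjTranspose_add, hAs, conjTranspose_one]
  calc Rᴴ * ((1 + -A) * Uᴴ) * (U * (1 + A) * R)
      = Rᴴ * (1 + -A) * (Uᴴ * U) * (1 + A) * R := by noncomm_ring
    _ = (Rᴴ * (1 + A)) * ((1 - A) * R) := by rw [hU]; noncomm_ring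
    _ = 1 := by rw [h1, h2, mul_one]

theorem cay_surj {U : Matrix (Fin n) (Fin n) ℂ} (hU : Uᴴ * U = 1) :
    ∃ Ψ : Matrix (Fin n) (Fin n) ℂ → Matrix (Fin n) (Fin n) ℂ, Tendsto Ψ (𝓝 U) (𝓝 0) ∧
      ∀ᶠ V in 𝓝 U, Vᴴ * V = 1 → cay U (Ψ V) = V := by
  have : CompleteSpace (Matrix (Fin n) (Fin n) ℂ) := FiniteDimensional.complete ℝ _
  have hU' : U * Uᴴ = 1 := mul_eq_one_comm.1 hU
  have h2u : IsUnit (2 : Matrix (Fin n) (Fin n) ℂ) := by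
    have : (2 : Matrix (Fin n) (Fin n) ℂ) = algebraMap ℂ _ 2 := by
      rw [map_ofNat]
    rw [this]
    exact (IsUnit.mk0 (2 : ℂ) two_ne_zero).map _
  have hc : Tendsto (fun V => Uᴴ * V + 1) (𝓝 U) (𝓝 2) := by
    have : Continuous (fun V : Matrix (Fin n) (Fin n) ℂ => Uᴴ * V + 1) := by fun_prop
    have h := this.tendsto U
    rw [hU, one_add_one_eq_two] at h
    exact h
  have hc1 : Tendsto (fun V => Uᴴ * V - 1) (𝓝 U) (𝓝 0) := by
    have : Continuous (fun V : Matrix (Fin n) (Fin n) ℂ => Uᴴ * V - 1) := by fun_prop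
    have h := this.tendsto U
    rw [hU, sub_self] at h
    exact h
  obtain ⟨u, hu⟩ := h2u
  refine ⟨fun V => (Uᴴ * V - 1) * Ring.inverse (Uᴴ * V + 1), ?_, ?_⟩
  · have hi := NormedRing.inverse_continuousAt u
    rw [hu] at hi
    have := hc1.mul (hi.tendsto.comp hc)
    simpa using this
  · have hev := Units.nhds u
    rw [hu] at hev
    filter_upwards [hc.eventually hev] with V hV hVV
    have hV : IsUnit (Uᴴ * V + 1) := hV
    set W := Uᴴ * V with hW
    have hWW : Wᴴ * W = 1 := by
      rw [hW, conjTranspose_mul, conjTranspose_conjTranspose, Matrix.mul_assoc,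
        ← Matrix.mul_assoc U, hU', Matrix.one_mul, hVV]
    have hUW : U * W = V := by rw [hW, ← Matrix.mul_assoc, hU', Matrix.one_mul]
    have h1 := Ring.mul_inverse_cancel _ hV
    have h2 := Ring.inverse_mul_cancel _ hV
    set R := Ring.inverse (W + 1) with hR
    set A := (W - 1) * R with hA
    have h3 := congrArg conjTranspose h1
    rw [conjTranspose_mul, conjTranspose_add, conjTranspose_one] at h3
    have hAs : Aᴴ = -A := by
      rw [hA, conjTranspose_mul, conjTranspose_sub, conjTranspose_one]
      calc Rᴴ * (Wᴴ - 1) = Rᴴ * (Wᴴ - 1) * ((W + 1) * R) := by rw [h1, mul_one]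
        _ = Rᴴ * (Wᴴ * W + Wᴴ - W - 1) * R := by noncomm_ring
        _ = - (Rᴴ * (Wᴴ * W - Wᴴ + W - 1) * R) := by rw [hWW]; noncomm_ring
        _ = - ((Rᴴ * (Wᴴ + 1)) * ((W - 1) * R)) := by noncomm_ring
        _ = - ((W - 1) * R) := by rw [h3, one_mul]
    have e1 : 1 + A = 2 * W * R := by
      calc 1 + A = (W + 1) * R + (W - 1) * R := by rw [h1]
        _ = 2 * W * R := by noncomm_ring
    have e2 : 1 - A = 2 * R := by
      calc 1 - A = (W + 1) * R - (W - 1) * R := by rw [h1]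
        _ = 2 * R := by noncomm_ring
    have e3 : IsUnit (1 - A) := by
      rw [e2, ← hu]
      exact u.isUnit.mul (isUnit_iff_exists.2 ⟨_, h2, h1⟩)
    have e4 := Ring.mul_inverse_cancel _ e3
    rw [cay, skewL_of hAs]
    have e5 : 1 + A = W * (1 - A) := by rw [e1, e2]; noncomm_ring
    rw [e5]
    calc U * (W * (1 - A)) * Ring.inverse (1 - A)
        = U * W * ((1 - A) * Ring.inverse (1 - A)) := by noncomm_ring
      _ = V := by rw [e4, mul_one, hUW]

theorem f_analytic {f : Matrix (Fin n) (Fin n) ℂ → ℝ}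
    (hf : AnalyticOnNhd ℝ (fun x : Fin n → Fin n → ℂ => f (Matrix.of x)) Set.univ)
    (W : Matrix (Fin n) (Fin n) ℂ) : AnalyticAt ℝ f W := by
  let L : Matrix (Fin n) (Fin n) ℂ →L[ℝ] (Fin n → Fin n → ℂ) :=
    LinearMap.toContinuousLinearMap
    { toFun := fun B => Matrix.of.symm B
      map_add' := fun A B => rfl
      map_smul' := fun c B => rfl }
  exact AnalyticAt.comp (g := fun x : Fin n → Fin n → ℂ => f (Matrix.of x)) (f := L)
    (hf (L W) (Set.mem_univ _)) (L.analyticAt W)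

theorem fderiv_bound {f : Matrix (Fin n) (Fin n) ℂ → ℝ}
    {g : Matrix (Fin n) (Fin n) ℂ → Matrix (Fin n) (Fin n) ℂ}
    (hf : ∀ W, AnalyticAt ℝ f W) (hg : IsGradC f g)
    {U : Matrix (Fin n) (Fin n) ℂ} {B : Matrix (Fin n) (Fin n) ℂ}
    (hd : DifferentiableAt ℝ (cay U) B) (hu : ∀ᶠ x in 𝓝 B, (cay U x)ᴴ * cay U x = 1) :
    ∀ h, |fderiv ℝ f (cay U B) (fderiv ℝ (cay U) B h)| ≤
      frobC (projGradC g (cay U B)) * ‖fderiv ℝ (cay U) B h‖ := by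
  intro h
  set W := cay U B with hW
  set Z := fderiv ℝ (cay U) B h with hZ
  have hgr : fderiv ℝ f W Z = ∑ i, ∑ j, ((starRingEnd ℂ) (g W i j) * Z i j).re := by
    exact (line_deriv (hf W).differentiableAt Z).unique (hg W Z)
  have hZd : HasDerivAt (fun t : ℝ => cay U (B + t • h)) Z 0 := line_deriv hd h
  have hZc : HasDerivAt (fun t : ℝ => (cay U (B + t • h))ᴴ) Zᴴ 0 :=
    (conjL n).hasFDerivAt.comp_hasDerivAt 0 hZd
  have hp := hZc.mul hZd
  have hlc : Tendsto (fun t : ℝ => B + t • h) (𝓝 0) (𝓝 B) := line_tendsto B h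
  have hp2 := (hasDerivAt_const (0 : ℝ) (1 : Matrix (Fin n) (Fin n) ℂ)).congr_of_eventuallyEq
    (f₁ := (fun t : ℝ => (cay U (B + t • h))ᴴ) * (fun t : ℝ => cay U (B + t • h))) (by
      filter_upwards [hlc.eventually hu] with t ht
      exact ht)
  have hsk : Zᴴ * W + Wᴴ * Z = 0 := by
    have := hp.unique hp2
    simpa [← hW] using this
  rw [hgr, proj_pair g hu.self_of_nhds hsk]
  refine (re_sum_le _ _).trans (le_of_eq ?_)
  rw [frobC_eq Z]

theorem final (f : Matrix (Fin n) (Fin n) ℂ → ℝ)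
    (g : Matrix (Fin n) (Fin n) ℂ → Matrix (Fin n) (Fin n) ℂ)
    (hf : AnalyticOnNhd ℝ (fun x : Fin n → Fin n → ℂ => f (Matrix.of x)) Set.univ)
    (hg : IsGradC f g)
    (U : Matrix (Fin n) (Fin n) ℂ) (hU : Uᴴ * U = 1) :
    ∃ δ > (0 : ℝ), ∃ σ > (0 : ℝ), ∃ ζ : ℝ, ζ ∈ Set.Ioc (0 : ℝ) (1 / 2) ∧
      ∀ U' : Matrix (Fin n) (Fin n) ℂ, U'ᴴ * U' = 1 → frobC (U' - U) < δ →
        |f U' - f U| ^ (1 - ζ) ≤ σ * frobC (projGradC g U') := by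
  have hfa := f_analytic hf
  have hca := cay_analytic U
  obtain ⟨ζ, hζ, C, hC, hall⟩ := loj_chart (p := fun W => frobC (projGradC g W)) hfa hca
    (fun W => by rw [frobC_eq]; positivity) (by
      filter_upwards [hca.eventually_analyticAt, (cay_unitary hU).eventually_nhds] with B h3 h4
      exact fderiv_bound hfa hg h3.differentiableAt h4)
  rw [cay_zero] at hall
  obtain ⟨Ψ, hΨ, hs⟩ := cay_surj hU
  obtain ⟨δ, hδ, hball⟩ := Metric.eventually_nhds_iff.1 ((hΨ.eventually hall).and hs)
  refine ⟨δ, hδ, C, hC, ζ, hζ, fun V hV hVU => ?_⟩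
  obtain ⟨h1, h2⟩ := hball (y := V) (by rw [dist_eq_norm, ← frobC_eq]; exact hVU)
  rw [h2 hV] at h1
  exact h1

end U
end Loj

/-- Łojasiewicz inequality for the projected gradient on the unitary group:
if `f : ℂ^{n×n} → ℝ` is real analytic in the real and imaginary parts of the entries,
then every `U ∈ U(n)` admits `δ > 0`, `σ > 0` and `ζ ∈ (0, 1/2]` such that
`|f(U') − f(U)|^{1−ζ} ≤ σ ‖ProjGrad f(U')‖` for all unitary `U'` with `‖U' − U‖ < δ`. -/
theorem lojasiewicz_projGrad_unitary {n : ℕ}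
    (f : Matrix (Fin n) (Fin n) ℂ → ℝ)
    (g : Matrix (Fin n) (Fin n) ℂ → Matrix (Fin n) (Fin n) ℂ)
    (hf : AnalyticOnNhd ℝ (fun x : Fin n → Fin n → ℂ => f (Matrix.of x)) Set.univ)
    (hg : IsGradC f g)
    (U : Matrix (Fin n) (Fin n) ℂ) (hU : Uᴴ * U = 1) :
    ∃ δ > (0 : ℝ), ∃ σ > (0 : ℝ), ∃ ζ : ℝ, ζ ∈ Set.Ioc (0 : ℝ) (1 / 2) ∧
      ∀ U' : Matrix (Fin n) (Fin n) ℂ, U'ᴴ * U' = 1 → frobC (U' - U) < δ →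
        |f U' - f U| ^ (1 - ζ) ≤ σ * frobC (projGradC g U') := by
  exact Loj.final f g hf hg U hU
end

section
/- Let n ≥ 2, let f: ℝ^{n×n} → ℝ be differentiable, and let Q ∈ O(n). Then there exists a pair of indices 1 ≤ i < j ≤ n such that |(h^{ij}_Q)'(0)| ≥ (2/n) ‖ProjGrad f(Q)‖. -/
open Matrix BigOperators Filter

/-- Frobenius norm of a real matrix. -/
noncomputable def frobR {n : ℕ} (A : Matrix (Fin n) (Fin n) ℝ) : ℝ :=
  Real.sqrt (∑ i, ∑ j, (A i j) ^ 2)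

/-- `g` is the Euclidean gradient of `f : ℝ^{n×n} → ℝ`. -/
def IsGradR {n : ℕ} (f : Matrix (Fin n) (Fin n) ℝ → ℝ)
    (g : Matrix (Fin n) (Fin n) ℝ → Matrix (Fin n) (Fin n) ℝ) : Prop :=
  ∀ Q H, HasDerivAt (fun t : ℝ => f (Q + t • H)) (∑ i, ∑ j, g Q i j * H i j) 0

/-- Riemannian (projected) gradient on O(n): `Q (Λ - Λᵀ)/2` with `Λ = Qᵀ ∇f(Q)`. -/
noncomputable def projGradR {n : ℕ}
    (g : Matrix (Fin n) (Fin n) ℝ → Matrix (Fin n) (Fin n) ℝ)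
    (Q : Matrix (Fin n) (Fin n) ℝ) : Matrix (Fin n) (Fin n) ℝ :=
  Q * ((1 / 2 : ℝ) • (Qᵀ * g Q - (Qᵀ * g Q)ᵀ))

/-- Givens rotation `G(i,j,θ)`: identity except `G_{ii} = G_{jj} = cos θ`,
`G_{ij} = −sin θ`, `G_{ji} = sin θ`. -/
noncomputable def givensR (n : ℕ) (i j : Fin n) (θ : ℝ) : Matrix (Fin n) (Fin n) ℝ :=
  fun a b =>
    if a = i ∧ b = i then Real.cos θ
    else if a = j ∧ b = j then Real.cos θ
    else if a = i ∧ b = j then -Real.sin θ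
    else if a = j ∧ b = i then Real.sin θ
    else if a = b then 1 else 0

lemma givens_hasDeriv {n : ℕ} {i j : Fin n} (hij : i < j) (a b : Fin n) :
    HasDerivAt (fun θ : ℝ => givensR n i j θ a b)
      (if a = i ∧ b = j then -1 else if a = j ∧ b = i then 1 else 0) 0 := by
  have hne : i ≠ j := ne_of_lt hij
  have hc : HasDerivAt (fun θ : ℝ => Real.cos θ) 0 0 := by
    simpa using Real.hasDerivAt_cos 0
  have hs : HasDerivAt (fun θ : ℝ => Real.sin θ) 1 0 := by
    simpa using Real.hasDerivAt_sin 0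
  unfold givensR
  by_cases h1 : a = i ∧ b = i
  · obtain ⟨rfl, rfl⟩ := h1
    simpa [hne] using hc
  by_cases h2 : a = j ∧ b = j
  · obtain ⟨rfl, rfl⟩ := h2
    simpa [hne, hne.symm] using hc
  simp only [h1, h2, if_false]
  by_cases h3 : a = i ∧ b = j
  · simp only [h3, and_self, if_true]
    exact hs.neg
  by_cases h4 : a = j ∧ b = i
  · simp only [h3, h4, if_true, if_false]
    simpa [hne, hne.symm] using hs
  simp only [h3, h4, if_false]
  exact hasDerivAt_const _ _

lemma givens_zero {n : ℕ} (i j : Fin n) : givensR n i j 0 = 1 := by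
  ext a b
  simp only [givensR, Real.cos_zero, Real.sin_zero, Matrix.one_apply]
  split_ifs <;> grind

lemma E_aux {n : ℕ} {i j : Fin n} (hne : i ≠ j) (q : Fin n → ℝ) (k b : Fin n) :
    q k * (if k = i ∧ b = j then (-1 : ℝ) else if k = j ∧ b = i then 1 else 0) =
      (if k = j then (if b = i then q j else 0) else 0)
        - (if k = i then (if b = j then q i else 0) else 0) := by
  by_cases h1 : k = i
  · subst h1
    by_cases h2 : b = j <;> simp [h2, hne]
  · by_cases h2 : k = j
    · subst h2
      by_cases h3 : b = i <;> simp [h3, h1]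
    · simp [h1, h2]

lemma frobR_sq {n : ℕ} (A : Matrix (Fin n) (Fin n) ℝ) :
    frobR A ^ 2 = ∑ i, ∑ j, (A i j) ^ 2 :=
  Real.sq_sqrt (Finset.sum_nonneg fun i _ => Finset.sum_nonneg fun j _ => sq_nonneg _)

lemma deriv_givens {n : ℕ}
    (f : Matrix (Fin n) (Fin n) ℝ → ℝ)
    (g : Matrix (Fin n) (Fin n) ℝ → Matrix (Fin n) (Fin n) ℝ)
    (hdiff : Differentiable ℝ (fun x : Fin n → Fin n → ℝ => f (Matrix.of x)))
    (hg : IsGradR f g)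
    (Q : Matrix (Fin n) (Fin n) ℝ) {i j : Fin n} (hij : i < j) :
    deriv (fun θ : ℝ => f (Q * givensR n i j θ)) 0 =
      (Qᵀ * g Q) j i - (Qᵀ * g Q) i j := by
  have hne : i ≠ j := ne_of_lt hij
  set E : Fin n → Fin n → ℝ :=
    fun a b => if a = i ∧ b = j then -1 else if a = j ∧ b = i then 1 else 0 with hE
  set V : Fin n → Fin n → ℝ := fun a b => ∑ k, Q a k * E k b with hV
  set F : (Fin n → Fin n → ℝ) → ℝ := fun x => f (Matrix.of x) with hF
  have hcurve : HasDerivAt (fun θ : ℝ => (fun a b => ∑ k, Q a k * givensR n i j θ k b :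
      Fin n → Fin n → ℝ)) V 0 := by
    rw [hasDerivAt_pi]; intro a
    rw [hasDerivAt_pi]; intro b
    exact HasDerivAt.fun_sum fun k _ => (givens_hasDeriv hij k b).const_mul (Q a k)
  have h0 : (fun a b => ∑ k, Q a k * givensR n i j 0 k b : Fin n → Fin n → ℝ)
      = fun a b => Q a b := by
    funext a b
    rw [givens_zero]
    have := congrFun (congrFun (Matrix.mul_one Q) a) b
    rwa [Matrix.mul_apply] at this
  have hFd := (hdiff (fun a b => Q a b)).hasFDerivAt
  have h1 : HasDerivAt (fun θ : ℝ => F (fun a b => ∑ k, Q a k * givensR n i j θ k b))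
      (fderiv ℝ F (fun a b => Q a b) V) 0 :=
    HasFDerivAt.comp_hasDerivAt_of_eq (0 : ℝ) hFd hcurve h0.symm
  have hline : HasDerivAt (fun t : ℝ => (fun a b => Q a b + t * V a b :
      Fin n → Fin n → ℝ)) V 0 := by
    rw [hasDerivAt_pi]; intro a
    rw [hasDerivAt_pi]; intro b
    simpa using ((hasDerivAt_id (0 : ℝ)).mul_const (V a b)).const_add (Q a b)
  have h2 : HasDerivAt (fun t : ℝ => F (fun a b => Q a b + t * V a b))
      (fderiv ℝ F (fun a b => Q a b) V) 0 :=
    HasFDerivAt.comp_hasDerivAt_of_eq (0 : ℝ) hFd hline (by simp)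
  have h3 : HasDerivAt (fun t : ℝ => F (fun a b => Q a b + t * V a b))
      (∑ a, ∑ b, g Q a b * V a b) 0 := hg Q (Matrix.of V)
  have h4 : deriv (fun θ : ℝ => f (Q * givensR n i j θ)) 0
      = fderiv ℝ F (fun a b => Q a b) V := h1.deriv
  rw [h4, h2.unique h3]
  have hVv : ∀ a b, V a b = (if b = i then Q a j else 0) - (if b = j then Q a i else 0) := by
    intro a b
    have : ∀ k, Q a k * E k b = (if k = j then (if b = i then Q a j else 0) else 0)
        - (if k = i then (if b = j then Q a i else 0) else 0) := by
      intro k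
      exact E_aux hne (fun k => Q a k) k b
    simp only [hV, this, Finset.sum_sub_distrib, Finset.sum_ite_eq', Finset.mem_univ, if_true]
  simp only [hVv, mul_sub, mul_ite, mul_zero, Finset.sum_sub_distrib, Finset.sum_ite_eq',
    Finset.mem_univ, if_true, Matrix.mul_apply, Matrix.transpose_apply]
  simp only [mul_comm]

lemma frob_sq {n : ℕ} (A : Matrix (Fin n) (Fin n) ℝ) :
    ∑ i, ∑ j, (A i j) ^ 2 = Matrix.trace (Aᵀ * A) := by
  rw [Finset.sum_comm]
  simp [Matrix.trace, Matrix.mul_apply, sq]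

lemma frob_mul {n : ℕ} (Q A : Matrix (Fin n) (Fin n) ℝ) (hQ : Qᵀ * Q = 1) :
    ∑ i, ∑ j, ((Q * A) i j) ^ 2 = ∑ i, ∑ j, (A i j) ^ 2 := by
  rw [frob_sq, frob_sq, Matrix.transpose_mul, Matrix.mul_assoc, ← Matrix.mul_assoc Qᵀ, hQ,
    Matrix.one_mul]

/-- For `n ≥ 2`, `f` differentiable and `Q ∈ O(n)`, there exists a pair `i < j` with
`|(h^{ij}_Q)'(0)| ≥ (2/n) ‖ProjGrad f(Q)‖`, where `h^{ij}_Q(θ) = f(Q G(i,j,θ))`. -/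
theorem exists_pair_gradient_aligned {n : ℕ} (hn : 2 ≤ n)
    (f : Matrix (Fin n) (Fin n) ℝ → ℝ)
    (g : Matrix (Fin n) (Fin n) ℝ → Matrix (Fin n) (Fin n) ℝ)
    (hdiff : Differentiable ℝ (fun x : Fin n → Fin n → ℝ => f (Matrix.of x)))
    (hg : IsGradR f g)
    (Q : Matrix (Fin n) (Fin n) ℝ) (hQ : Qᵀ * Q = 1) :
    ∃ i j : Fin n, i < j ∧
      (2 / (n : ℝ)) * frobR (projGradR g Q) ≤
        |deriv (fun θ : ℝ => f (Q * givensR n i j θ)) 0| := by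
  by_contra! hcon
  have hn0 : (0 : ℝ) < n := by exact_mod_cast (by omega : 0 < n)
  set c := (2 / (n : ℝ)) * frobR (projGradR g Q) with hc
  have hlt : ∀ i j : Fin n, i < j → |(Qᵀ * g Q) j i - (Qᵀ * g Q) i j| < c := by
    intro i j hij
    have := hcon i j hij
    rwa [deriv_givens f g hdiff hg Q hij] at this
  have hcpos : 0 < c :=
    lt_of_le_of_lt (abs_nonneg _) (hlt ⟨0, by omega⟩ ⟨1, by omega⟩ (by simp))
  have hall : ∀ i j : Fin n, |(Qᵀ * g Q) i j - (Qᵀ * g Q) j i| < c := by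
    intro i j
    rcases lt_trichotomy i j with h | h | h
    · rw [abs_sub_comm]; exact hlt i j h
    · subst h; simpa using hcpos
    · exact hlt j i h
  have hsq : frobR (projGradR g Q) ^ 2
      = ∑ i, ∑ j, (1 / 4 : ℝ) * ((Qᵀ * g Q) i j - (Qᵀ * g Q) j i) ^ 2 := by
    rw [frobR_sq]
    unfold projGradR
    rw [frob_mul _ _ hQ]
    refine Finset.sum_congr rfl fun i _ => Finset.sum_congr rfl fun j _ => ?_
    rw [Matrix.smul_apply, Matrix.sub_apply, Matrix.transpose_apply, smul_eq_mul]
    ring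
  have hne : (Finset.univ : Finset (Fin n)).Nonempty := ⟨⟨0, by omega⟩, Finset.mem_univ _⟩
  have hbound : ∑ i, ∑ j, (1 / 4 : ℝ) * ((Qᵀ * g Q) i j - (Qᵀ * g Q) j i) ^ 2
      < ∑ _i : Fin n, ∑ _j : Fin n, (1 / 4 : ℝ) * c ^ 2 := by
    refine Finset.sum_lt_sum_of_nonempty hne fun i _ =>
      Finset.sum_lt_sum_of_nonempty hne fun j _ => ?_
    have := sq_lt_sq' (abs_lt.mp (hall i j)).1 (abs_lt.mp (hall i j)).2
    linarith
  rw [← hsq] at hbound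
  simp only [Finset.sum_const, Finset.card_univ, Fintype.card_fin, nsmul_eq_mul] at hbound
  have : (n : ℝ) * (n * (1 / 4 * c ^ 2)) = frobR (projGradR g Q) ^ 2 := by
    rw [hc]; field_simp; try ring
  linarith
end

section
/- Let f: ℝ^{n×n} → ℝ be differentiable and Q ∈ O(n). Then Σ_{1≤i<j≤n} ((h^{ij}_Q)'(0))² = 2 ‖ProjGrad f(Q)‖². -/
open Matrix BigOperators Filter

theorem aux_chain {n : ℕ}
    (f : Matrix (Fin n) (Fin n) ℝ → ℝ)
    (g : Matrix (Fin n) (Fin n) ℝ → Matrix (Fin n) (Fin n) ℝ)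
    (hdiff : Differentiable ℝ (fun x : Fin n → Fin n → ℝ => f (Matrix.of x)))
    (hg : IsGradR f g) (Q : Matrix (Fin n) (Fin n) ℝ)
    (c : ℝ → Fin n → Fin n → ℝ) (H : Fin n → Fin n → ℝ) (hc : HasDerivAt c H 0)
    (h0 : c 0 = fun i j => Q i j) :
    HasDerivAt (fun t => f (Matrix.of (c t))) (∑ i, ∑ j, g Q i j * H i j) 0 := by
  have gen : ∀ c : ℝ → Fin n → Fin n → ℝ, HasDerivAt c H 0 → (c 0 = fun i j => Q i j) →
      HasDerivAt (fun t => f (Matrix.of (c t)))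
        (fderiv ℝ (fun x : Fin n → Fin n → ℝ => f (Matrix.of x)) (fun i j => Q i j) H) 0 := by
    intro c hc h0
    have h1 := (hdiff (c 0)).hasFDerivAt.comp_hasDerivAt (0 : ℝ) hc
    rw [h0] at h1
    exact h1
  have hl : HasDerivAt (fun (t : ℝ) (i j : Fin n) => Q i j + t * H i j) H 0 := by
    rw [hasDerivAt_pi]; intro i
    rw [hasDerivAt_pi]; intro j
    simpa using ((hasDerivAt_id (0 : ℝ)).mul_const (H i j)).const_add (Q i j)
  have h2 := gen _ hl (by simp)
  have h3 := hg Q (Matrix.of H)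
  have h4 := h2.unique h3
  have h5 := gen c hc h0
  rw [h4] at h5
  exact h5

theorem aux_givens {n : ℕ} (i j : Fin n) (hij : i ≠ j) (a b : Fin n) :
    HasDerivAt (fun θ => givensR n i j θ a b)
      ((if a = j ∧ b = i then 1 else 0) - (if a = i ∧ b = j then 1 else 0)) 0 := by
  have hcos := Real.hasDerivAt_cos 0
  have hsin := Real.hasDerivAt_sin 0
  have hsin' := (Real.hasDerivAt_sin 0).neg
  simp only [Real.sin_zero, Real.cos_zero, neg_zero] at hcos hsin hsin'
  unfold givensR
  by_cases h1 : a = i ∧ b = i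
  · have e1 : ¬ (a = j ∧ b = i) := by grind
    have e2 : ¬ (a = i ∧ b = j) := by grind
    simpa only [if_pos h1, if_neg e1, if_neg e2, sub_zero] using hcos
  by_cases h2 : a = j ∧ b = j
  · have e1 : ¬ (a = j ∧ b = i) := by grind
    have e2 : ¬ (a = i ∧ b = j) := by grind
    simpa only [if_neg h1, if_pos h2, if_neg e1, if_neg e2, sub_zero] using hcos
  by_cases h3 : a = i ∧ b = j
  · have e1 : ¬ (a = j ∧ b = i) := by grind
    simp only [if_neg h1, if_neg h2, if_pos h3, if_neg e1, zero_sub]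
    exact hsin'
  by_cases h4 : a = j ∧ b = i
  · simpa only [if_neg h1, if_neg h2, if_neg h3, if_pos h4, sub_zero] using hsin
  simp only [if_neg h1, if_neg h2, if_neg h3, if_neg h4, sub_zero]
  exact hasDerivAt_const _ _

theorem aux_givens_zero {n : ℕ} (i j : Fin n) (hij : i ≠ j) : givensR n i j 0 = 1 := by
  ext a b
  simp only [givensR, Real.cos_zero, Real.sin_zero, neg_zero, Matrix.one_apply]
  grind

theorem aux_deriv {n : ℕ}
    (f : Matrix (Fin n) (Fin n) ℝ → ℝ)
    (g : Matrix (Fin n) (Fin n) ℝ → Matrix (Fin n) (Fin n) ℝ)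
    (hdiff : Differentiable ℝ (fun x : Fin n → Fin n → ℝ => f (Matrix.of x)))
    (hg : IsGradR f g) (Q : Matrix (Fin n) (Fin n) ℝ) (i j : Fin n) (hij : i ≠ j) :
    deriv (fun θ : ℝ => f (Q * givensR n i j θ)) 0 = (Qᵀ * g Q) j i - (Qᵀ * g Q) i j := by
  have hc : HasDerivAt (fun (θ : ℝ) (a b : Fin n) => (Q * givensR n i j θ) a b)
      (fun a b => ∑ k, Q a k *
        ((if k = j ∧ b = i then 1 else 0) - (if k = i ∧ b = j then 1 else 0))) 0 := by
    rw [hasDerivAt_pi]; intro a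
    rw [hasDerivAt_pi]; intro b
    simp only [Matrix.mul_apply]
    exact HasDerivAt.fun_sum fun k _ => (aux_givens i j hij k b).const_mul (Q a k)
  have h := aux_chain f g hdiff hg Q _ _ hc (by
    funext a b
    rw [aux_givens_zero i j hij, Matrix.mul_one])
  refine h.deriv.trans ?_
  have e : ∀ a b, ∑ k, Q a k *
        ((if k = j ∧ b = i then (1:ℝ) else 0) - (if k = i ∧ b = j then 1 else 0)) =
        (if b = i then Q a j else 0) - (if b = j then Q a i else 0) := by
    intro a b
    simp only [ite_and, mul_sub, Finset.sum_sub_distrib, mul_ite, mul_one, mul_zero,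
      Finset.sum_ite_eq', Finset.sum_ite_eq, Finset.mem_univ, if_true]
  simp only [e]
  simp only [mul_sub, Finset.sum_sub_distrib, mul_ite, mul_zero, Finset.sum_ite_eq',
    Finset.mem_univ, if_true, Matrix.mul_apply, Matrix.transpose_apply]
  simp only [mul_comm]

theorem aux_frob {n : ℕ} (A : Matrix (Fin n) (Fin n) ℝ) :
    frobR A ^ 2 = (Aᵀ * A).trace := by
  unfold frobR
  rw [Real.sq_sqrt (by positivity), Finset.sum_comm]
  simp only [Matrix.trace, Matrix.diag, Matrix.mul_apply, Matrix.transpose_apply, sq]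

theorem aux_sum {n : ℕ} (F : Fin n → Fin n → ℝ) (hs : ∀ i j, F i j = F j i)
    (hd : ∀ i, F i i = 0) :
    ∑ i, ∑ j, F i j =
      2 * (Finset.univ.filter (fun p : Fin n × Fin n => p.1 < p.2)).sum (fun p => F p.1 p.2) := by
  have h1 : (Finset.univ.filter (fun p : Fin n × Fin n => p.1 < p.2)).sum (fun p => F p.1 p.2)
      = ∑ i, ∑ j, if i < j then F i j else 0 := by
    rw [Finset.sum_filter, Fintype.sum_prod_type]
  have h2 : ∑ i, ∑ j, (if i < j then F i j else 0) = ∑ i, ∑ j, if j < i then F i j else 0 := by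
    rw [Finset.sum_comm]
    refine Finset.sum_congr rfl fun i _ => Finset.sum_congr rfl fun j _ => ?_
    rw [hs i j]
  rw [h1, two_mul]
  nth_rewrite 2 [h2]
  simp only [← Finset.sum_add_distrib]
  refine Finset.sum_congr rfl fun i _ => Finset.sum_congr rfl fun j _ => ?_
  rcases lt_trichotomy i j with h | h | h
  · simp [h, h.not_gt]
  · subst h; simp [hd]
  · simp [h, h.not_gt]

/-- `Σ_{i<j} ((h^{ij}_Q)'(0))² = 2 ‖ProjGrad f(Q)‖²`, where `h^{ij}_Q(θ) = f(Q G(i,j,θ))`. -/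
theorem sum_sq_deriv_eq_two_normsq_projGrad {n : ℕ}
    (f : Matrix (Fin n) (Fin n) ℝ → ℝ)
    (g : Matrix (Fin n) (Fin n) ℝ → Matrix (Fin n) (Fin n) ℝ)
    (hdiff : Differentiable ℝ (fun x : Fin n → Fin n → ℝ => f (Matrix.of x)))
    (hg : IsGradR f g)
    (Q : Matrix (Fin n) (Fin n) ℝ) (hQ : Qᵀ * Q = 1) :
    (Finset.univ.filter (fun p : Fin n × Fin n => p.1 < p.2)).sum
        (fun p => (deriv (fun θ : ℝ => f (Q * givensR n p.1 p.2 θ)) 0) ^ 2) =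
      2 * frobR (projGradR g Q) ^ 2 := by
  have hL : frobR (projGradR g Q) ^ 2 =
      frobR ((1 / 2 : ℝ) • (Qᵀ * g Q - (Qᵀ * g Q)ᵀ)) ^ 2 := by
    rw [aux_frob, aux_frob]
    unfold projGradR
    rw [Matrix.transpose_mul, Matrix.mul_assoc, ← Matrix.mul_assoc Qᵀ Q, hQ, Matrix.one_mul]
  rw [hL]
  generalize hLam : Qᵀ * g Q = L
  have hsum := aux_sum (fun i j => (((1 / 2 : ℝ) • (L - Lᵀ)) i j) ^ 2)
    (by intro i j; simp; ring) (by intro i; simp)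
  unfold frobR
  rw [Real.sq_sqrt (by positivity), hsum, ← mul_assoc, Finset.mul_sum]
  refine Finset.sum_congr rfl fun p hp => ?_
  have hp' : p.1 < p.2 := (Finset.mem_filter.mp hp).2
  rw [aux_deriv f g hdiff hg Q p.1 p.2 hp'.ne, hLam]
  simp only [Matrix.smul_apply, Matrix.sub_apply, Matrix.transpose_apply, smul_eq_mul]
  ring
end

section
/- Let f: ℝ^{n×n} → ℝ be smooth and let {Q_k} be a Jacobi-G sequence for f on O(n). Then every accumulation point Q* of {Q_k} is a stationary point of f restricted to O(n), i.e. ProjGrad f(Q*) = 0. -/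
open Matrix BigOperators Filter

theorem jg_givens_zero (n : ℕ) (i j : Fin n) : givensR n i j 0 = 1 := by
  ext a b
  simp only [givensR, Real.cos_zero, Real.sin_zero, neg_zero, Matrix.one_apply]
  split_ifs <;> grind

theorem jg_givens_deriv (n : ℕ) (i j : Fin n) : ∃ K : Matrix (Fin n) (Fin n) ℝ,
    ∀ a b, HasDerivAt (fun t => givensR n i j t a b) (K a b) 0 := by
  have : ∀ a b, ∃ k : ℝ, HasDerivAt (fun t => givensR n i j t a b) k 0 := by
    intro a b
    simp only [givensR]
    split_ifs
    · exact ⟨_, Real.hasDerivAt_cos 0⟩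
    · exact ⟨_, Real.hasDerivAt_cos 0⟩
    · exact ⟨_, (Real.hasDerivAt_sin 0).neg⟩
    · exact ⟨_, Real.hasDerivAt_sin 0⟩
    · exact ⟨_, hasDerivAt_const _ _⟩
    · exact ⟨_, hasDerivAt_const _ _⟩
  choose K hK using this
  exact ⟨K, hK⟩

/-- the derivative of `f` along the Givens curve is continuous in `Q` -/
theorem jg_curve_deriv {n : ℕ} (F : (Fin n → Fin n → ℝ) → ℝ)
    (hF : ContDiff ℝ (⊤ : ℕ∞) F) (i j : Fin n) :
    Continuous (fun Q : Fin n → Fin n → ℝ =>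
      deriv (fun t : ℝ => F (Matrix.of Q * givensR n i j t)) 0) := by
  obtain ⟨K, hK⟩ := jg_givens_deriv n i j
  have h1 : ∀ Q : Fin n → Fin n → ℝ,
      deriv (fun t : ℝ => F (Matrix.of Q * givensR n i j t)) 0
        = fderiv ℝ F Q (fun a b => ∑ c, Q a c * K c b) := by
    intro Q
    have hc : HasDerivAt (fun t : ℝ => (fun a b => ∑ c, Q a c * givensR n i j t c b
        : Fin n → Fin n → ℝ)) (fun a b => ∑ c, Q a c * K c b) 0 := by
      refine hasDerivAt_pi.2 fun a => hasDerivAt_pi.2 fun b => ?_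
      exact HasDerivAt.fun_sum fun c _ => (hK c b).const_mul (Q a c)
    have h0 : (fun a b => ∑ c, Q a c * givensR n i j 0 c b : Fin n → Fin n → ℝ) = Q := by
      rw [jg_givens_zero]
      funext a b
      simp [Matrix.one_apply]
    have hd : HasFDerivAt F (fderiv ℝ F Q)
        (fun a b => ∑ c, Q a c * givensR n i j 0 c b : Fin n → Fin n → ℝ) := by
      rw [h0]
      exact (hF.differentiable (by simp) Q).hasFDerivAt
    exact (hd.comp_hasDerivAt (0 : ℝ) hc).deriv
  simp_rw [h1]
  have h2 : Continuous (fderiv ℝ F) := hF.continuous_fderiv (by simp)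
  exact h2.clm_apply (by fun_prop)

theorem jg_grad_cont {n : ℕ} (f : Matrix (Fin n) (Fin n) ℝ → ℝ)
    (g : Matrix (Fin n) (Fin n) ℝ → Matrix (Fin n) (Fin n) ℝ)
    (hF : ContDiff ℝ (⊤ : ℕ∞) (fun x : Fin n → Fin n → ℝ => f (Matrix.of x)))
    (hg : IsGradR f g) : Continuous g := by
  set F : (Fin n → Fin n → ℝ) → ℝ := fun x => f (Matrix.of x) with hFdef
  have h2 : Continuous (fderiv ℝ F) := hF.continuous_fderiv (by simp)
  refine continuous_matrix fun a b => ?_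
  have h1 : ∀ Q : Fin n → Fin n → ℝ,
      g (Matrix.of Q) a b = fderiv ℝ F Q (Matrix.of.symm (Matrix.single a b (1 : ℝ))) := by
    intro Q
    set H : Fin n → Fin n → ℝ := Matrix.of.symm (Matrix.single a b (1 : ℝ)) with hH
    have hc : HasDerivAt (fun t : ℝ => Q + t • H) H 0 := by
      simpa using ((hasDerivAt_id (0 : ℝ)).smul_const H).const_add Q
    have hd : HasFDerivAt F (fderiv ℝ F Q) (Q + (0 : ℝ) • H) := by
      rw [zero_smul, add_zero]
      exact (hF.differentiable (by simp) Q).hasFDerivAt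
    have e := (hd.comp_hasDerivAt (0 : ℝ) hc).unique
      (hg (Matrix.of Q) (Matrix.single a b (1 : ℝ)))
    rw [e]
    have : ∀ x y, g (Matrix.of Q) x y * Matrix.single a b (1 : ℝ) x y
        = if x = a then (if y = b then g (Matrix.of Q) x y else 0) else 0 := by
      intro x y
      simp only [Matrix.single, Matrix.of_apply]
      grind
    simp_rw [this]
    simp
  have h3 : Continuous fun Q : Fin n → Fin n → ℝ => g (Matrix.of Q) a b := by
    simp_rw [h1]
    exact h2.clm_apply continuous_const
  exact h3

theorem jg_frob_cont {n : ℕ} : Continuous (frobR : Matrix (Fin n) (Fin n) ℝ → ℝ) := by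
  unfold frobR
  fun_prop

theorem jg_entry_le {n : ℕ} (A : Matrix (Fin n) (Fin n) ℝ) (a b : Fin n) :
    |A a b| ≤ frobR A := by
  unfold frobR
  refine Real.abs_le_sqrt ?_
  calc (A a b) ^ 2 ≤ ∑ y, (A a y) ^ 2 :=
        Finset.single_le_sum (f := fun y => (A a y) ^ 2) (fun y _ => sq_nonneg _)
          (Finset.mem_univ b)
    _ ≤ _ := Finset.single_le_sum (f := fun x => ∑ y, (A x y) ^ 2)
          (fun x _ => Finset.sum_nonneg fun y _ => sq_nonneg _) (Finset.mem_univ a)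

theorem jg_pigeon {α : Type*} [Finite α] (u : ℕ → α) :
    ∃ a, ∃ ψ : ℕ → ℕ, StrictMono ψ ∧ ∀ m, u (ψ m) = a := by
  obtain ⟨a, ha⟩ : ∃ a, ∃ᶠ m in atTop, u m = a := by
    by_contra h
    push Not at h
    have := eventually_all.2 h
    obtain ⟨m, hm⟩ := this.exists
    exact hm (u m) rfl
  exact ⟨a, extraction_of_frequently_atTop ha⟩

/-- Weak convergence of the Jacobi-G algorithm on O(n) for a smooth cost function:
every accumulation point of the iterates is a stationary point. -/
theorem jacobiG_accumulation_stationary {n : ℕ}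
    (f : Matrix (Fin n) (Fin n) ℝ → ℝ)
    (g : Matrix (Fin n) (Fin n) ℝ → Matrix (Fin n) (Fin n) ℝ)
    (hsmooth : ContDiff ℝ (⊤ : ℕ∞) (fun x : Fin n → Fin n → ℝ => f (Matrix.of x)))
    (hg : IsGradR f g)
    (δ : ℝ) (hδ0 : 0 < δ) (hδn : δ < 2 / (n : ℝ))
    (Q : ℕ → Matrix (Fin n) (Fin n) ℝ) (hQ0 : (Q 0)ᵀ * Q 0 = 1)
    (i j : ℕ → Fin n) (θ : ℕ → ℝ)
    (hij : ∀ k, i k < j k)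
    (hupd : ∀ k, Q (k + 1) = Q k * givensR n (i k) (j k) (θ k))
    (hpair : ∀ k, δ * frobR (projGradR g (Q k)) ≤
      |deriv (fun t : ℝ => f (Q k * givensR n (i k) (j k) t)) 0|)
    (hmax : ∀ k t, f (Q k * givensR n (i k) (j k) t) ≤ f (Q (k + 1)))
    (hminabs : ∀ k t, (∀ s, f (Q k * givensR n (i k) (j k) s) ≤
        f (Q k * givensR n (i k) (j k) t)) → |θ k| ≤ |t|)
    (Qs : Matrix (Fin n) (Fin n) ℝ)
    (hacc : ∃ φ : ℕ → ℕ, StrictMono φ ∧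
      Tendsto (fun m => frobR (Q (φ m) - Qs)) atTop (nhds 0)) :
    projGradR g Qs = 0 := by
  obtain ⟨φ, hφ, hlim⟩ := hacc
  obtain ⟨⟨a, b⟩, ψ, hψ, hab⟩ := jg_pigeon (fun m => (i (φ m), j (φ m)))
  have hia : ∀ m, i (φ (ψ m)) = a := fun m => congrArg Prod.fst (hab m)
  have hjb : ∀ m, j (φ (ψ m)) = b := fun m => congrArg Prod.snd (hab m)
  have hconv : Tendsto (fun m => Q (φ (ψ m))) atTop (nhds Qs) := by
    refine tendsto_pi_nhds.2 fun x => tendsto_pi_nhds.2 fun y => ?_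
    rw [tendsto_iff_dist_tendsto_zero]
    refine squeeze_zero (fun _ => dist_nonneg) (fun m => ?_) (hlim.comp hψ.tendsto_atTop)
    exact jg_entry_le (Q (φ (ψ m)) - Qs) x y
  have hfc : Continuous f := hsmooth.continuous
  have hgc := jg_grad_cont f g hsmooth hg
  have hmono : Monotone (fun k => f (Q k)) := by
    refine monotone_nat_of_le_succ fun k => ?_
    have := hmax k 0
    rwa [jg_givens_zero, mul_one] at this
  have hsub : Tendsto (fun m => f (Q (φ (ψ m)))) atTop (nhds (f Qs)) :=
    (hfc.tendsto Qs).comp hconv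
  have hle : ∀ k, f (Q k) ≤ f Qs := by
    intro k
    refine ge_of_tendsto hsub ?_
    filter_upwards [eventually_ge_atTop k] with m hm
    exact hmono (hm.trans ((hψ.id_le m).trans (hφ.id_le _)))
  have hloc : ∀ t, f (Qs * givensR n a b t) ≤ f Qs := by
    intro t
    have hc : Continuous fun R : Matrix (Fin n) (Fin n) ℝ => f (R * givensR n a b t) :=
      hfc.comp (by fun_prop)
    refine le_of_tendsto ((hc.tendsto Qs).comp hconv) (Eventually.of_forall fun m => ?_)
    have := hmax (φ (ψ m)) t
    rw [hia, hjb] at this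
    exact this.trans (hle _)
  have hzero : deriv (fun t : ℝ => f (Qs * givensR n a b t)) 0 = 0 := by
    refine IsLocalMax.deriv_eq_zero (Eventually.of_forall fun t => ?_)
    simpa [jg_givens_zero] using hloc t
  have hD : Continuous fun R : Matrix (Fin n) (Fin n) ℝ =>
      deriv (fun t : ℝ => f (R * givensR n a b t)) 0 :=
    jg_curve_deriv (fun x => f (Matrix.of x)) hsmooth a b
  have hP : Continuous fun R : Matrix (Fin n) (Fin n) ℝ => δ * frobR (projGradR g R) := by
    refine continuous_const.mul (jg_frob_cont.comp ?_)
    unfold projGradR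
    fun_prop
  have hfin := le_of_tendsto_of_tendsto' ((hP.tendsto Qs).comp hconv)
    ((hD.abs.tendsto Qs).comp hconv) (fun m => by
      have := hpair (φ (ψ m))
      rw [hia, hjb] at this
      exact this)
  rw [hzero, abs_zero] at hfin
  have hfrob : frobR (projGradR g Qs) ≤ 0 := by
    by_contra h
    push Not at h
    exact absurd hfin (not_le.2 (mul_pos hδ0 h))
  ext x y
  exact abs_nonpos_iff.1 ((jg_entry_le _ x y).trans hfrob)
end
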